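/- arXiv:2110.13893 — 3 statements merged into one kernel-verified Lean document; each statement's English description precedes it below -/
import Mathlib

section
/- Let d ≥ 5, n ≥ 4 and a, b > 1, and let C be an (a,b) separated DOT clustering of an n-element configuration in Z^d with a ≥ e^{max{100b, 10d²}}. Then for every cluster index i and every x ∈ C^i, esc_{C^i}(x) > 0 implies esc_{π(C)}(x) > 0. -/
open MeasureTheory

namespace HATFormal

/-- Points of the lattice `ℤ^d`. -/
abbrev Pt (d : ℕ) := Fin d → ℤ

/-- The `2d` unit steps of the simple random walk on `ℤ^d`. -/
def Dir (d : ℕ) : Set (Pt d) :=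
  {s | ∃ i : Fin d, s = Pi.single i 1 ∨ s = Pi.single i (-1)}

/-- The position, after `t` steps, of the walk started at `x` with steps `s`. -/
def wpos (d : ℕ) (x : Pt d) {T : ℕ} (s : Fin T → Pt d) (t : ℕ) : Pt d :=
  x + ∑ i ∈ Finset.univ.filter (fun i : Fin T => (i : ℕ) < t), s i

/-- The probability of an event `P` of the first `T` steps of simple random walk on `ℤ^d`. -/
noncomputable def prob (d T : ℕ) (P : (Fin T → Pt d) → Prop) : ℝ :=
  (Nat.card {s : Fin T → Pt d // (∀ i, s i ∈ Dir d) ∧ P s} : ℝ) / ((2 * d : ℕ) : ℝ) ^ T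

open Classical in
/-- `esc d A x = P_x(τ_A = ∞)` if `x ∈ A`, and `0` otherwise. -/
noncomputable def esc (d : ℕ) (A : Set (Pt d)) (x : Pt d) : ℝ :=
  if x ∈ A then ⨅ T : ℕ, prob d T (fun s => ∀ t, 1 ≤ t → t ≤ T → wpos d x s t ∉ A) else 0

/-- The capacity of `A`. -/
noncomputable def capa (d : ℕ) (A : Set (Pt d)) : ℝ := ∑' x : A, esc d A (x : Pt d)

/-- The harmonic measure `H_A(x) = esc_A(x) / cap_A`. -/
noncomputable def harm (d : ℕ) (A : Set (Pt d)) (x : Pt d) : ℝ := esc d A x / capa d A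

/-- `P_x(τ_W < ∞)`. -/
noncomputable def retProb (d : ℕ) (W : Set (Pt d)) (x : Pt d) : ℝ :=
  ∑' t : ℕ, prob d t (fun s => 1 ≤ t ∧ wpos d x s t ∈ W ∧
    ∀ u, 1 ≤ u → u < t → wpos d x s u ∉ W)

/-- `P_x(τ_W < ∞ and S_{τ_W − 1} = y)`. -/
noncomputable def hitFrom (d : ℕ) (W : Set (Pt d)) (x y : Pt d) : ℝ :=
  ∑' t : ℕ, prob d t (fun s => 1 ≤ t ∧ wpos d x s t ∈ W ∧ wpos d x s (t - 1) = y ∧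
    ∀ u, 1 ≤ u → u < t → wpos d x s u ∉ W)

/-- `P_x(τ_W < ∞ and S_{τ_W} ∈ T)`. -/
noncomputable def firstHitIn (d : ℕ) (W T : Set (Pt d)) (x : Pt d) : ℝ :=
  ∑' t : ℕ, prob d t (fun s => 1 ≤ t ∧ wpos d x s t ∈ W ∧ wpos d x s t ∈ T ∧
    ∀ u, 1 ≤ u → u < t → wpos d x s u ∉ W)

/-- `P_x(S_{τ_W − 1} = y ∣ τ_W < ∞)`. -/
noncomputable def transP (d : ℕ) (W : Set (Pt d)) (x y : Pt d) : ℝ :=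
  hitFrom d W x y / retProb d W x

/-- The Green's function of simple random walk on `ℤ^d`. -/
noncomputable def green (d : ℕ) (x : Pt d) : ℝ :=
  ∑' t : ℕ, prob d t (fun s => wpos d x s t = 0)

/-- Configurations: finite subsets of `ℤ^d`. -/
abbrev Conf (d : ℕ) := Finset (Pt d)

/-- `p_U(x, y)`, the probability that HAT activates at `x` and transports to `y`. -/
noncomputable def pHAT (d : ℕ) (U : Conf d) (x y : Pt d) : ℝ :=
  harm d (↑U) x * transP d ((↑U : Set (Pt d)) \ {x}) x y

open Classical in
/-- The transition probabilities of HAT. -/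
noncomputable def hatProb (d : ℕ) (U V : Conf d) : ℝ :=
  if V = U then ∑' z : Pt d, pHAT d U z z
  else ∑' x : Pt d, ∑' y : Pt d,
    if x ∈ U ∧ x ≠ y ∧ V = insert y (U.erase x) then pHAT d U x y else 0

instance (d : ℕ) : MeasurableSpace (Conf d) := ⊤

/-- `μ` is the law of HAT started from `U`. -/
def IsHATLaw (d : ℕ) (U : Conf d) (μ : Measure (ℕ → Conf d)) : Prop :=
  IsProbabilityMeasure μ ∧
  ∀ (t : ℕ) (u : ℕ → Conf d),
    μ {ω | ∀ s ≤ t, ω s = u s} =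
      (if u 0 = U then 1 else 0) *
        ∏ s ∈ Finset.range t, ENNReal.ofReal (hatProb d (u s) (u (s + 1)))

/-- A signed permutation plus translation of `ℤ^d`. -/
def SymImage (d : ℕ) (σ : Equiv.Perm (Fin d)) (ε : Fin d → ℤ) (v : Pt d) (x : Pt d) : Pt d :=
  fun i => v i + ε i * x (σ i)

/-- `SymEq d U V` holds when `V = gU` for a symmetry `g` of `ℤ^d`. -/
def SymEq (d : ℕ) (U V : Conf d) : Prop :=
  ∃ (σ : Equiv.Perm (Fin d)) (ε : Fin d → ℤ) (v : Pt d),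
    (∀ i, ε i = 1 ∨ ε i = -1) ∧ V = U.image (SymImage d σ ε v)

/-- Euclidean distance on `ℤ^d`. -/
noncomputable def dist0 (d : ℕ) (x y : Pt d) : ℝ :=
  Real.sqrt (∑ i, ((x i : ℝ) - (y i : ℝ)) ^ 2)

/-- Euclidean distance between finite subsets of `ℤ^d`. -/
noncomputable def setDist (d : ℕ) (A B : Finset (Pt d)) : ℝ :=
  sInf {r : ℝ | ∃ x ∈ A, ∃ y ∈ B, r = dist0 d x y}

/-- Euclidean diameter of a finite subset of `ℤ^d`. -/
noncomputable def diam0 (d : ℕ) (A : Finset (Pt d)) : ℝ :=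
  sSup {r : ℝ | ∃ x ∈ A, ∃ y ∈ A, r = dist0 d x y}

/-- Lattice (nearest-neighbor) adjacency in `ℤ^d`. -/
def latAdj (d : ℕ) (x y : Pt d) : Prop := (∑ i, (x i - y i).natAbs) = 1

/-- Exterior lattice boundary of a set. -/
def bdry (d : ℕ) (A : Set (Pt d)) : Set (Pt d) := {z | z ∉ A ∧ ∃ w ∈ A, latAdj d z w}

/-- Non-isolated configurations: some exposed element has a lattice neighbor in the set. -/
def NonIso (d : ℕ) (U : Conf d) : Prop :=
  ∃ x ∈ U, 0 < esc d (↑U) x ∧ ∃ y ∈ U, latAdj d x y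

/-- `C` is a clustering (ordered partition into nonempty clusters) of `U`. -/
def IsClusteringOf (d : ℕ) {k : ℕ} (C : Fin k → Finset (Pt d)) (U : Finset (Pt d)) : Prop :=
  (∀ i, (C i).Nonempty) ∧ (∀ i j, i ≠ j → Disjoint (C i) (C j)) ∧
    Finset.univ.biUnion C = U

/-- `C^{≠ i}`, the union of the clusters other than `i`. -/
def others (d : ℕ) {k : ℕ} (C : Fin k → Finset (Pt d)) (i : Fin k) : Finset (Pt d) :=
  Finset.univ.biUnion fun j => if j = i then ∅ else C j

/-- The separation of a clustering. -/
noncomputable def sep (d : ℕ) {k : ℕ} (C : Fin k → Finset (Pt d)) : ℝ :=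
  ⨅ i, setDist d (C i) (others d C i)

/-- `(a, b)` separated dimer-or-trimer (DOT) clusterings. -/
def IsDOT (d : ℕ) {k : ℕ} (C : Fin k → Finset (Pt d)) (a b : ℝ) : Prop :=
  (∀ i, (C i).card = 2 ∨ (C i).card = 3) ∧ a ≤ sep d C ∧
    ∀ i, diam0 d (C i) ≤ b * Real.log (setDist d (C i) (others d C i))

/-- Clusterings with an unspecified number of clusters. -/
abbrev ClusteringS (d : ℕ) := Σ k : ℕ, Fin k → Finset (Pt d)

/-- `π(C)`, the union of the clusters of `C`. -/
def confOf (d : ℕ) (C : ClusteringS d) : Conf d := Finset.univ.biUnion C.2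

/-- `C ∈ 𝒞(U, a, b)`. -/
def InC (d : ℕ) (U : Conf d) (a b : ℝ) (C : ClusteringS d) : Prop :=
  IsClusteringOf d C.2 U ∧ IsDOT d C.2 a b

/-- `U ∈ 𝒰_{d,n}(a, b)`. -/
def InU (d n : ℕ) (a b : ℝ) (U : Conf d) : Prop :=
  U.card = n ∧ ∃ C : ClusteringS d, InC d U a b C

/-- `C` is a clustering of an `n`-element configuration. -/
def IsClusteringConf (d n : ℕ) (C : ClusteringS d) : Prop :=
  (∀ i, (C.2 i).Nonempty) ∧ (∀ i j, i ≠ j → Disjoint (C.2 i) (C.2 j)) ∧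
    (confOf d C).card = n

open Classical in
/-- One step of the natural clustering. -/
noncomputable def clustStep (d : ℕ) (Ut Ut1 : Conf d) (C : ClusteringS d) : ClusteringS d :=
  if Ut1 = Ut then C
  else if h : ∃ p : Pt d × Pt d × Fin C.1,
      Ut \ Ut1 = {p.1} ∧ Ut1 \ Ut = {p.2.1} ∧ p.1 ∈ C.2 p.2.2 then
    ⟨C.1, Function.update C.2 h.choose.2.2
      (insert h.choose.2.1 ((C.2 h.choose.2.2).erase h.choose.1))⟩
  else ⟨1, fun _ => Ut1⟩

/-- The natural clustering of the trajectory `ω` with initial clustering `C0`. -/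
noncomputable def natClust (d : ℕ) (ω : ℕ → Conf d) (C0 : ClusteringS d) : ℕ → ClusteringS d
  | 0 => C0
  | t + 1 => clustStep d (ω t) (ω (t + 1)) (natClust d ω C0 t)

/-- `a_s = s^{1/2 − n^{−100}} + 100 n`. -/
noncomputable def aSep (n s : ℕ) : ℝ :=
  (s : ℝ) ^ ((1 : ℝ) / 2 - (n : ℝ) ^ (-(100 : ℝ))) + 100 * n

/-- `C^{i, x, y}`: remove `x` from cluster `i` of `C` and add `y` to that cluster. -/
def updC (d : ℕ) (C : ClusteringS d) (i : Fin C.1) (x y : Pt d) : ClusteringS d :=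
  ⟨C.1, Function.update C.2 i (insert y ((C.2 i).erase x))⟩

open Classical in
/-- The transition probabilities of the lifting of HAT to clusterings. -/
noncomputable def liftProb (d : ℕ) (E0 E1 : ClusteringS d) : ℝ :=
  ∑' x : Pt d, ∑' y : Pt d,
    if ∃ i : Fin E0.1, x ∈ E0.2 i ∧ E1 = updC d E0 i x y
    then pHAT d (confOf d E0) x y else 0

/-- The capacity of a clustering: the sum of the capacities of its clusters. -/
noncomputable def capS (d : ℕ) (C : ClusteringS d) : ℝ := ∑ i, capa d (↑(C.2 i))

/-- `H_C(i, x) = esc_{C^i}(x) / cap_C`. -/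
noncomputable def harmS (d : ℕ) (C : ClusteringS d) (i : Fin C.1) (x : Pt d) : ℝ :=
  esc d (↑(C.2 i)) x / capS d C

/-- `q_C(i, x, y)`. -/
noncomputable def qIHAT (d : ℕ) (C : ClusteringS d) (i : Fin C.1) (x y : Pt d) : ℝ :=
  harmS d C i x * transP d ((↑(C.2 i) : Set (Pt d)) \ {x}) x y

open Classical in
/-- The transition probabilities of intracluster HAT (IHAT). -/
noncomputable def ihatProb (d : ℕ) (D E : ClusteringS d) : ℝ :=
  ∑' x : Pt d, ∑' y : Pt d, ∑ i : Fin D.1,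
    if x ∈ D.2 i ∧ E = updC d D i x y then qIHAT d D i x y else 0

instance (d : ℕ) : MeasurableSpace (ClusteringS d) := ⊤

open Classical in
/-- `μ` is the law of the lifted HAT chain started from `E0`. -/
def IsLiftLaw (d : ℕ) (E0 : ClusteringS d) (μ : Measure (ℕ → ClusteringS d)) : Prop :=
  IsProbabilityMeasure μ ∧
  ∀ (t : ℕ) (u : ℕ → ClusteringS d),
    μ {ω | ∀ s ≤ t, ω s = u s} =
      (if u 0 = E0 then 1 else 0) *
        ∏ s ∈ Finset.range t, ENNReal.ofReal (liftProb d (u s) (u (s + 1)))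

open Classical in
/-- `μ` is the law of intracluster HAT started from `D0`. -/
def IsIHATLaw (d : ℕ) (D0 : ClusteringS d) (μ : Measure (ℕ → ClusteringS d)) : Prop :=
  IsProbabilityMeasure μ ∧
  ∀ (t : ℕ) (u : ℕ → ClusteringS d),
    μ {ω | ∀ s ≤ t, ω s = u s} =
      (if u 0 = D0 then 1 else 0) *
        ∏ s ∈ Finset.range t, ENNReal.ofReal (ihatProb d (u s) (u (s + 1)))

/-- `Pairs(E0, E1)`. -/
def Pairs (d : ℕ) (E0 E1 : ClusteringS d) : Set (Pt d × Pt d) :=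
  {p | 0 < pHAT d (confOf d E0) p.1 p.2 ∧
    ∃ i : Fin E0.1, p.1 ∈ E0.2 i ∧ E1 = updC d E0 i p.1 p.2}

/-- `Triples(E0, E1)`. -/
def Triples (d : ℕ) (E0 E1 : ClusteringS d) : Set (Fin E0.1 × Pt d × Pt d) :=
  {q | 0 < qIHAT d E0 q.1 q.2.1 q.2.2 ∧ E1 = updC d E0 q.1 q.2.1 q.2.2}

/-- The first standard basis vector of `ℤ^d`. -/
def e1v (d : ℕ) : Pt d := fun i => if (i : ℕ) = 0 then 1 else 0

/-- Reference dimers and trimers. -/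
def Ref (d : ℕ) : Set (Finset (Pt d)) :=
  {A | ∃ x : Pt d, A = {x, x + e1v d} ∨ A = {x, x + e1v d, x + e1v d + e1v d}}

/-- *-adjacency in `ℤ^d`: distinct points differing by at most one in each coordinate. -/
def starAdj (d : ℕ) (x y : Pt d) : Prop := x ≠ y ∧ ∀ i, (x i - y i).natAbs ≤ 1

/-- The *-visible boundary of `A`. -/
def visBdry (d : ℕ) (A : Finset (Pt d)) : Set (Pt d) :=
  {x | (∃ y ∈ A, starAdj d x y) ∧
    ∃ γ : ℕ → Pt d, γ 0 = x ∧ (∀ t, latAdj d (γ t) (γ (t + 1))) ∧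
      (∀ t, γ t ∉ A) ∧ ∀ r : ℝ, ∃ t, r < dist0 d (γ t) 0}

/-- `A` is connected in the nearest-neighbor graph of `ℤ^d`. -/
def LatConnected (d : ℕ) (A : Finset (Pt d)) : Prop :=
  ∀ x ∈ A, ∀ y ∈ A, ∃ (L : ℕ) (γ : ℕ → Pt d), γ 0 = x ∧ γ L = y ∧
    (∀ t < L, latAdj d (γ t) (γ (t + 1))) ∧ ∀ t ≤ L, γ t ∈ A

/-- Strict lexicographic order on `ℤ^d`. -/
def lexLt (d : ℕ) (x y : Pt d) : Prop :=
  ∃ i : Fin d, (∀ j, j < i → x j = y j) ∧ x i < y i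

/-- `x` is the lex (least) element of `A`. -/
def IsLex (d : ℕ) (A : Finset (Pt d)) (x : Pt d) : Prop :=
  x ∈ A ∧ ∀ y ∈ A, y ≠ x → lexLt d x y

/-!
Every element of `π(C)` escapes. Two points `z + eᵢ`, `z + eⱼ` with `i ≠ j` are at distance `√2`, so
if all `d` of the points `z + eᵢ` were in `π(C)`, separation would put them in one cluster, which
has fewer than `d` elements. Hence from every site the walk can step to some `z + eᵢ` outside
`π(C)`, and repeating this takes it arbitrarily far away with positive probability. From far away it
never comes back with positive probability: `h x = (|x|² + 7)^(-1/2)` is superharmonic in every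
dimension `d ≥ 3`, so by the maximum principle the probability of hitting a set on which `h ≥ m` is
at most `h x / m`.
-/

section

variable {d : ℕ}

/-- The steps `± eᵢ` of the walk, indexed by `(i, ±1)`: a bijective parametrization of `Dir d` over
which one can sum. -/
def unitStep (k : Fin d × ℤˣ) : Pt d := Pi.single k.1 (k.2 : ℤ)

theorem unitStep_injective : Function.Injective (unitStep (d := d)) := by
  rintro ⟨i, ε⟩ ⟨j, δ⟩ h
  have hi : (ε : ℤ) = Pi.single (M := fun _ => ℤ) j (δ : ℤ) i := by
    simpa [unitStep] using congrFun h i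
  obtain rfl : i = j := by
    by_contra hij
    exact ε.ne_zero (by simp [hi, hij])
  simpa [Units.ext_iff] using hi

theorem mem_dir_iff {s : Pt d} : s ∈ Dir d ↔ ∃ k, unitStep k = s := by
  constructor
  · rintro ⟨i, rfl | rfl⟩
    · exact ⟨(i, 1), by simp [unitStep]⟩
    · exact ⟨(i, -1), by simp [unitStep]⟩
  · rintro ⟨⟨i, ε⟩, rfl⟩
    rcases Int.units_eq_one_or ε with rfl | rfl
    · exact ⟨i, Or.inl (by simp [unitStep])⟩
    · exact ⟨i, Or.inr (by simp [unitStep])⟩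

theorem finite_dir : (Dir d).Finite :=
  (Set.finite_range unitStep).subset fun _ hs => mem_dir_iff.mp hs

theorem finite_walks (T : ℕ) (P : (Fin T → Pt d) → Prop) :
    Finite {s : Fin T → Pt d // (∀ i, s i ∈ Dir d) ∧ P s} :=
  ((Set.Finite.pi' fun _ => finite_dir).subset fun _ hs => hs.1 :
    {s : Fin T → Pt d | (∀ i, s i ∈ Dir d) ∧ P s}.Finite)

theorem natCard_walks_succ (T : ℕ) (P : (Fin (T + 1) → Pt d) → Prop) :
    Nat.card {s : Fin (T + 1) → Pt d // (∀ i, s i ∈ Dir d) ∧ P s} =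
      ∑ k, Nat.card {s : Fin T → Pt d // (∀ i, s i ∈ Dir d) ∧ P (Fin.cons (unitStep k) s)} := by
  have := fun k => finite_walks T fun s => P (Fin.cons (unitStep k) s)
  rw [← Nat.card_sigma]
  symm
  refine Nat.card_congr (Equiv.ofBijective (fun p => ⟨Fin.cons (unitStep p.1) p.2.1,
    Fin.cases (mem_dir_iff.mpr ⟨p.1, rfl⟩) p.2.2.1, p.2.2.2⟩) ⟨?_, ?_⟩)
  · rintro ⟨k, s, hs⟩ ⟨l, r, hr⟩ h
    have hcons : (Fin.cons (unitStep k) s : Fin (T + 1) → Pt d) = Fin.cons (unitStep l) r :=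
      congrArg Subtype.val h
    obtain ⟨hkl, rfl⟩ := Fin.cons_inj.mp hcons
    obtain rfl := unitStep_injective hkl
    rfl
  · rintro ⟨s, hs, hP⟩
    obtain ⟨k, hk⟩ := mem_dir_iff.mp (hs 0)
    have hcons : Fin.cons (unitStep k) (Fin.tail s) = s := by rw [hk, Fin.cons_self_tail]
    exact ⟨⟨k, Fin.tail s, fun i => hs i.succ, by rwa [hcons]⟩, Subtype.ext hcons⟩

theorem prob_succ (T : ℕ) (P : (Fin (T + 1) → Pt d) → Prop) :
    prob d (T + 1) P = (∑ k, prob d T fun s => P (Fin.cons (unitStep k) s)) / (2 * d) := by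
  simp only [prob, natCard_walks_succ, ← Finset.sum_div, pow_succ, div_div]
  push_cast
  rfl

theorem wpos_zero (x : Pt d) {T : ℕ} (s : Fin T → Pt d) : wpos d x s 0 = x := by
  simp [wpos]

theorem wpos_cons_succ (x e : Pt d) {T : ℕ} (s : Fin T → Pt d) (t : ℕ) :
    wpos d x (Fin.cons e s : Fin (T + 1) → Pt d) (t + 1) = wpos d (x + e) s t := by
  simp [wpos, Finset.sum_filter, Fin.sum_univ_succ, add_assoc]

/-- The transition operator of simple random walk: the mean of `f` over the neighbors of `x`. -/
noncomputable def stepMean (f : Pt d → ℝ) (x : Pt d) : ℝ :=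
  (∑ k : Fin d × ℤˣ, f (x + unitStep k)) / (2 * d)

theorem stepMean_mono {f g : Pt d → ℝ} (h : f ≤ g) (x : Pt d) : stepMean f x ≤ stepMean g x := by
  unfold stepMean
  gcongr
  exact h _

theorem stepMean_one_sub_div (hd : 0 < d) (f : Pt d → ℝ) (m : ℝ) (x : Pt d) :
    stepMean (fun y => 1 - f y / m) x = 1 - stepMean f x / m := by
  simp only [stepMean, Finset.sum_sub_distrib, ← Finset.sum_div]
  simp only [Finset.sum_const, Finset.card_univ, Fintype.card_prod, Fintype.card_fin,
    Fintype.card_units_int, nsmul_eq_mul, Nat.cast_mul, Nat.cast_ofNat, mul_one]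
  field_simp

theorem div_le_stepMean {f : Pt d → ℝ} (hf : 0 ≤ f) (x : Pt d) (k : Fin d × ℤˣ) :
    f (x + unitStep k) / (2 * d) ≤ stepMean f x := by
  unfold stepMean
  gcongr
  exact Finset.single_le_sum (f := fun k => f (x + unitStep k)) (fun _ _ => hf _)
    (Finset.mem_univ k)

/-- The probability that the walk started at `x` avoids `A` at the times `1, …, T`. -/
noncomputable def avoidProb (A : Set (Pt d)) (T : ℕ) (x : Pt d) : ℝ :=
  prob d T fun s => ∀ t, 1 ≤ t → t ≤ T → wpos d x s t ∉ A

theorem avoidProb_nonneg (A : Set (Pt d)) (T : ℕ) : 0 ≤ avoidProb A T := fun _ => by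
  unfold avoidProb prob
  positivity

theorem avoidProb_zero (A : Set (Pt d)) (x : Pt d) : avoidProb A 0 x = 1 := by
  have no_times (s : Fin 0 → Pt d) : (∀ t, 1 ≤ t → t ≤ 0 → wpos d x s t ∉ A) ↔ True := by
    simp only [iff_true]
    omega
  simp only [avoidProb, prob, no_times]
  simp

theorem avoidProb_succ (A : Set (Pt d)) (T : ℕ) (x : Pt d) :
    avoidProb A (T + 1) x = stepMean (Aᶜ.indicator (avoidProb A T)) x := by
  have split_times (k : Fin d × ℤˣ) (s : Fin T → Pt d) :
      (∀ t, 1 ≤ t → t ≤ T + 1 → wpos d x (Fin.cons (unitStep k) s : Fin (T + 1) → Pt d) t ∉ A) ↔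
        x + unitStep k ∉ A ∧ ∀ t, 1 ≤ t → t ≤ T → wpos d (x + unitStep k) s t ∉ A := by
    constructor
    · intro h
      exact ⟨by simpa [wpos_cons_succ, wpos_zero] using h 1 le_rfl (by omega),
        fun t h₁ hT => by simpa [wpos_cons_succ] using h (t + 1) (by omega) (by omega)⟩
    · rintro ⟨h₀, h⟩ (_ | _ | t) h₁ hT
      · omega
      · simpa [wpos_cons_succ, wpos_zero] using h₀
      · simpa [wpos_cons_succ] using h (t + 1) (by omega) (by omega)
  rw [avoidProb, prob_succ]
  simp only [split_times, stepMean]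
  congr 1
  refine Finset.sum_congr rfl fun k _ => ?_
  by_cases hk : x + unitStep k ∈ A <;> simp [hk, avoidProb, prob]

/-- The probability that the walk started at `x`, which need not lie in `A`, avoids `A` at all
positive times. -/
noncomputable def escapeProb (A : Set (Pt d)) (x : Pt d) : ℝ := ⨅ T, avoidProb A T x

theorem esc_of_mem {A : Set (Pt d)} {x : Pt d} (hx : x ∈ A) : esc d A x = escapeProb A x :=
  if_pos hx

theorem escapeProb_le_avoidProb (A : Set (Pt d)) (T : ℕ) (x : Pt d) :
    escapeProb A x ≤ avoidProb A T x :=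
  ciInf_le ⟨0, by rintro _ ⟨T, rfl⟩; exact avoidProb_nonneg A T x⟩ T

theorem escapeProb_pos_of_step {A : Set (Pt d)} {x : Pt d} (k : Fin d × ℤˣ)
    (hA : x + unitStep k ∉ A) (hpos : 0 < escapeProb A (x + unitStep k)) :
    0 < escapeProb A x := by
  have hd : (1 : ℝ) ≤ d := by exact_mod_cast k.1.pos
  refine lt_of_lt_of_le (b := escapeProb A (x + unitStep k) / (2 * d)) (by positivity)
    (le_ciInf fun T => ?_)
  cases T with
  | zero =>
    have hle := escapeProb_le_avoidProb A 0 (x + unitStep k)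
    rw [avoidProb_zero] at hle ⊢
    exact div_le_one_of_le₀ (by linarith) (by positivity)
  | succ T =>
    calc escapeProb A (x + unitStep k) / (2 * d)
      _ ≤ Aᶜ.indicator (avoidProb A T) (x + unitStep k) / (2 * d) := by
        rw [Set.indicator_of_mem hA]
        gcongr
        exact escapeProb_le_avoidProb A T _
      _ ≤ avoidProb A (T + 1) x := by
        rw [avoidProb_succ]
        exact div_le_stepMean (Set.indicator_nonneg fun y _ => avoidProb_nonneg A T y) x k

theorem one_sub_div_le_avoidProb (hd : 0 < d) {A : Set (Pt d)} {h : Pt d → ℝ} {m : ℝ}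
    (hm : 0 < m) (h_nonneg : 0 ≤ h) (h_super : ∀ x, stepMean h x ≤ h x) (hA : ∀ u ∈ A, m ≤ h u)
    (T : ℕ) (x : Pt d) : 1 - h x / m ≤ avoidProb A T x := by
  induction T generalizing x with
  | zero =>
    rw [avoidProb_zero]
    exact sub_le_self _ (div_nonneg (h_nonneg x) hm.le)
  | succ T ih =>
    have le_indicator : (fun y => 1 - h y / m) ≤ Aᶜ.indicator (avoidProb A T) := fun y => by
      by_cases hy : y ∈ A
      · simpa [hy] using (one_le_div hm).mpr (hA y hy)
      · simpa [hy] using ih y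
    calc 1 - h x / m
      _ ≤ 1 - stepMean h x / m := by gcongr; exact h_super x
      _ = stepMean (fun y => 1 - h y / m) x := (stepMean_one_sub_div hd h m x).symm
      _ ≤ avoidProb A (T + 1) x := by
        rw [avoidProb_succ]
        exact stepMean_mono le_indicator x

/-- The squared Euclidean norm on `ℤ^d`, with real values. -/
def normSq (x : Pt d) : ℝ := ∑ i, (x i : ℝ) ^ 2

theorem normSq_nonneg (x : Pt d) : 0 ≤ normSq x :=
  Finset.sum_nonneg fun _ _ => sq_nonneg _

theorem sq_le_normSq (x : Pt d) (i : Fin d) : (x i : ℝ) ^ 2 ≤ normSq x :=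
  Finset.single_le_sum (f := fun i => (x i : ℝ) ^ 2) (fun _ _ => sq_nonneg _) (Finset.mem_univ i)

theorem sum_coord_le_normSq (x : Pt d) : ((∑ i, x i : ℤ) : ℝ) ≤ normSq x := by
  rw [Int.cast_sum]
  exact Finset.sum_le_sum fun i _ => by exact_mod_cast Int.le_self_sq (x i)

theorem normSq_add_unitStep (x : Pt d) (i : Fin d) (ε : ℤˣ) :
    normSq (x + unitStep (i, ε)) = normSq x + 2 * (ε : ℤ) * x i + 1 := by
  have hε : ((ε : ℤ) : ℝ) ^ 2 = 1 := by exact_mod_cast Int.isUnit_sq ε.isUnit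
  simp only [normSq, unitStep, Pi.add_apply, Int.cast_add, add_sq, Finset.sum_add_distrib]
  simp only [Pi.single_apply, Int.cast_ite, Int.cast_zero, mul_ite, mul_zero, ite_pow, hε,
    zero_pow two_ne_zero, Finset.sum_ite_eq', Finset.mem_univ, if_true]
  ring

/-- The inverse distance `(|x|² + 7)^(-1/2)`, which plays the role of the Green's function. The
exponent makes it superharmonic for every `d ≥ 3`; in `d = 3` the second-order terms cancel, and
the shift `7` is there to absorb the fourth-order ones. -/
noncomputable def invDist (x : Pt d) : ℝ := (√(normSq x + 7))⁻¹

theorem invDist_pos (x : Pt d) : 0 < invDist x := by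
  have := normSq_nonneg x
  unfold invDist
  positivity

theorem invDist_lt_inv_sqrt {x : Pt d} {r : ℝ} (hr : 0 ≤ r) (h : r < normSq x) :
    invDist x < (√(r + 7))⁻¹ := by
  unfold invDist
  gcongr

theorem inv_sqrt_le_invDist {x : Pt d} {r : ℝ} (h : normSq x ≤ r) :
    (√(r + 7))⁻¹ ≤ invDist x := by
  have := normSq_nonneg x
  unfold invDist
  gcongr

-- The Taylor polynomial of order 4, with its last coefficient `35 / 128` enlarged to `3 / 4` to
-- make room for the remainder.
theorem inv_sqrt_one_add_le {u : ℝ} (hu : u ^ 2 ≤ 1 / 8) :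
    (√(1 + u))⁻¹ ≤ 1 - u / 2 + 3 / 8 * u ^ 2 - 5 / 16 * u ^ 3 + 3 / 4 * u ^ 4 := by
  obtain ⟨hlo, hhi⟩ : -(3 / 8) ≤ u ∧ u ≤ 3 / 8 :=
    abs_le_of_sq_le_sq' (by linarith) (by norm_num)
  set p := 1 - u / 2 + 3 / 8 * u ^ 2 - 5 / 16 * u ^ 3 + 3 / 4 * u ^ 4 with hp
  have p_nonneg : 0 ≤ p := by nlinarith [sq_nonneg u, sq_nonneg (u ^ 2)]
  have remainder : p ^ 2 * (1 + u) - 1 = u ^ 4 * (61 / 64 + 31 / 32 * u - 83 / 256 * u ^ 2 +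
      49 / 256 * u ^ 3 + 3 / 32 * u ^ 4 + 9 / 16 * u ^ 5) := by
    rw [hp]
    ring
  have remainder_nonneg : 0 ≤ 61 / 64 + 31 / 32 * u - 83 / 256 * u ^ 2 +
      49 / 256 * u ^ 3 + 3 / 32 * u ^ 4 + 9 / 16 * u ^ 5 := by
    nlinarith [sq_nonneg u, sq_nonneg (u ^ 2)]
  have sq_le : ((√(1 + u))⁻¹) ^ 2 ≤ p ^ 2 := by
    rw [inv_pow, Real.sq_sqrt (by linarith), inv_le_iff_one_le_mul₀ (by linarith)]
    nlinarith [mul_nonneg (by positivity : 0 ≤ u ^ 4) remainder_nonneg]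
  exact le_of_sq_le_sq sq_le p_nonneg

theorem inv_sqrt_add_inv_sqrt_le {R x : ℝ} (hR : 0 < R) (hx : 32 * x ^ 2 ≤ R ^ 2) :
    (√(R + 2 * x))⁻¹ + (√(R - 2 * x))⁻¹ ≤
      (√R)⁻¹ * (2 + 3 * x ^ 2 / R ^ 2 + 24 * x ^ 4 / R ^ 4) := by
  have hu : (2 * x / R) ^ 2 ≤ 1 / 8 := by
    rw [div_pow, div_le_div_iff₀ (by positivity) (by norm_num)]
    linarith
  have factor (y : ℝ) : (√(R + y))⁻¹ = (√R)⁻¹ * (√(1 + y / R))⁻¹ := by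
    rw [← mul_inv, ← Real.sqrt_mul hR.le]
    congr 2
    field_simp
  calc (√(R + 2 * x))⁻¹ + (√(R - 2 * x))⁻¹
    _ = (√R)⁻¹ * ((√(1 + 2 * x / R))⁻¹ + (√(1 + -(2 * x / R)))⁻¹) := by
      rw [sub_eq_add_neg, factor, factor, neg_div, mul_add]
    _ ≤ (√R)⁻¹ * (2 + 3 / 4 * (2 * x / R) ^ 2 + 3 / 2 * (2 * x / R) ^ 4) := by
      refine mul_le_mul_of_nonneg_left ?_ (by positivity)
      linarith [inv_sqrt_one_add_le hu, inv_sqrt_one_add_le (u := -(2 * x / R)) (by rwa [neg_sq])]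
    _ = (√R)⁻¹ * (2 + 3 * x ^ 2 / R ^ 2 + 24 * x ^ 4 / R ^ 4) := by ring

theorem le_inv_sqrt_sub_one {R : ℝ} (hR : 1 < R) :
    (√R)⁻¹ * (1 + 1 / (2 * R)) ≤ (√(R - 1))⁻¹ := by
  have hR₀ : 0 < R := by linarith
  refine le_of_sq_le_sq ?_ (by positivity)
  rw [mul_pow, inv_pow, inv_pow, Real.sq_sqrt hR₀.le, Real.sq_sqrt (by linarith),
    ← one_div (R - 1), le_div_iff₀ (by linarith)]
  calc R⁻¹ * (1 + 1 / (2 * R)) ^ 2 * (R - 1)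
    _ = 1 - (3 / (4 * R ^ 2) + 1 / (4 * R ^ 3)) := by
      field_simp
      ring
    _ ≤ 1 := sub_le_self _ (by positivity)

theorem sum_units_invDist_le (x : Pt d) (i : Fin d) :
    ∑ ε : ℤˣ, invDist (x + unitStep (i, ε)) ≤ (√(normSq x + 8))⁻¹ *
      (2 + (3 / (normSq x + 8) ^ 2 + 24 / (normSq x + 8) ^ 3) * (x i : ℝ) ^ 2) := by
  have hx := sq_le_normSq x i
  have h₀ := normSq_nonneg x
  set R := normSq x + 8 with hR
  have hR₀ : 0 < R := by linarith
  have fourth_le : 24 * (x i : ℝ) ^ 4 / R ^ 4 ≤ 24 / R ^ 3 * (x i : ℝ) ^ 2 := by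
    calc 24 * (x i : ℝ) ^ 4 / R ^ 4
      _ = 24 * (x i : ℝ) ^ 2 * (x i : ℝ) ^ 2 / R ^ 4 := by ring
      _ ≤ 24 * (x i : ℝ) ^ 2 * R / R ^ 4 := by gcongr; linarith
      _ = 24 / R ^ 3 * (x i : ℝ) ^ 2 := by field_simp
  calc ∑ ε : ℤˣ, invDist (x + unitStep (i, ε))
    _ = (√(R + 2 * x i))⁻¹ + (√(R - 2 * x i))⁻¹ := by
      simp only [UnitsInt.univ, invDist, normSq_add_unitStep, hR]
      rw [Finset.sum_pair (by decide)]
      push_cast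
      ring_nf
    _ ≤ (√R)⁻¹ * (2 + 3 * (x i : ℝ) ^ 2 / R ^ 2 + 24 * (x i : ℝ) ^ 4 / R ^ 4) :=
      inv_sqrt_add_inv_sqrt_le hR₀ (by nlinarith [sq_nonneg (R - 16)])
    _ ≤ (√R)⁻¹ * (2 + (3 / R ^ 2 + 24 / R ^ 3) * (x i : ℝ) ^ 2) := by
      refine mul_le_mul_of_nonneg_left ?_ (by positivity)
      linarith [mul_div_right_comm 3 ((x i : ℝ) ^ 2) (R ^ 2)]

theorem stepMean_invDist_le (hd : 3 ≤ d) (x : Pt d) : stepMean invDist x ≤ invDist x := by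
  have hd' : (3 : ℝ) ≤ d := by exact_mod_cast hd
  have h₀ := normSq_nonneg x
  have hsum := fun i => sum_units_invDist_le x i
  rw [stepMean, div_le_iff₀ (by positivity), Fintype.sum_prod_type]
  obtain ⟨R, hR⟩ : ∃ R, normSq x = R - 8 := ⟨normSq x + 8, by ring⟩
  have hR₈ : 8 ≤ R := by linarith
  simp only [hR, sub_add_cancel] at hsum
  calc ∑ i, ∑ ε : ℤˣ, invDist (x + unitStep (i, ε))
    _ ≤ ∑ i, (√R)⁻¹ * (2 + (3 / R ^ 2 + 24 / R ^ 3) * (x i : ℝ) ^ 2) :=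
      Finset.sum_le_sum fun i _ => hsum i
    _ = (√R)⁻¹ * (2 * d + (3 / R ^ 2 + 24 / R ^ 3) * (R - 8)) := by
      rw [← hR, normSq, ← Finset.mul_sum, Finset.sum_add_distrib, ← Finset.mul_sum]
      simp [mul_comm]
    _ = (√R)⁻¹ * (2 * d + 3 / R - 192 / R ^ 3) := by
      field_simp
      ring
    _ ≤ (√R)⁻¹ * (2 * d + d / R) := by
      gcongr
      have : 3 / R ≤ d / R := by gcongr
      have : 0 ≤ 192 / R ^ 3 := by positivity
      linarith
    _ = (√R)⁻¹ * (1 + 1 / (2 * R)) * (2 * d) := by ring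
    _ ≤ invDist x * (2 * d) := by
      gcongr
      rw [invDist, hR, show R - 8 + 7 = R - 1 by ring]
      exact le_inv_sqrt_sub_one (by linarith)

theorem escapeProb_pos_of_lt_normSq (hd : 3 ≤ d) {A : Set (Pt d)} {r : ℝ} (hr : 0 ≤ r)
    (hA : ∀ u ∈ A, normSq u ≤ r) {x : Pt d} (hx : r < normSq x) : 0 < escapeProb A x := by
  have hm : 0 < (√(r + 7))⁻¹ := by positivity
  refine lt_of_lt_of_le (b := 1 - invDist x / (√(r + 7))⁻¹) ?_ (le_ciInf fun T =>
    one_sub_div_le_avoidProb (by omega) hm (fun y => (invDist_pos y).le) (stepMean_invDist_le hd)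
      (fun u hu => inv_sqrt_le_invDist (hA u hu)) T x)
  exact sub_pos.mpr ((div_lt_one hm).mpr (invDist_lt_inv_sqrt hr hx))

theorem escapeProb_pos_of_forall_exists_notMem (hd : 3 ≤ d) {A : Set (Pt d)} (hA : A.Finite)
    (hstep : ∀ z, ∃ i, z + (Pi.single i 1 : Pt d) ∉ A) (x : Pt d) : 0 < escapeProb A x := by
  obtain ⟨r, hr⟩ := (hA.image normSq).bddAbove
  have hAr (u) (hu : u ∈ A) : normSq u ≤ max r 0 :=
    (hr (Set.mem_image_of_mem _ hu)).trans (le_max_left _ _)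
  have pos_of_sub_lt_sum (N : ℕ) : ∀ z : Pt d, max r 0 - N < (∑ i, z i : ℤ) →
      0 < escapeProb A z := by
    induction N with
    | zero =>
      intro z hz
      refine escapeProb_pos_of_lt_normSq hd (le_max_right _ _) hAr ?_
      exact lt_of_lt_of_le (by simpa using hz) (sum_coord_le_normSq z)
    | succ N ih =>
      intro z hz
      obtain ⟨i, hi⟩ := hstep z
      have hstep_eq : unitStep (i, 1) = Pi.single i 1 := by simp [unitStep]
      refine escapeProb_pos_of_step (i, 1) (by rwa [hstep_eq]) (ih _ ?_)
      have hsum : ∑ j, (z + unitStep (i, 1)) j = ∑ j, z j + 1 := by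
        simp [hstep_eq, Finset.sum_add_distrib]
      rw [hsum]
      push_cast at hz ⊢
      linarith
  obtain ⟨N, hN⟩ := exists_nat_gt (max r 0 - (∑ i, x i : ℤ))
  exact pos_of_sub_lt_sum N x (by linarith)

theorem dist0_add_single {i j : Fin d} (hij : i ≠ j) (z : Pt d) :
    dist0 d (z + Pi.single i 1) (z + Pi.single j 1) = √2 := by
  have sq_sub (l : Fin d) :
      (((z + Pi.single i 1 : Pt d) l : ℝ) - (z + Pi.single j 1 : Pt d) l) ^ 2 =
        (if l = i then 1 else 0) + (if l = j then 1 else 0) := by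
    by_cases hi : l = i <;> by_cases hj : l = j <;> simp_all
  rw [dist0, Finset.sum_congr rfl fun l _ => sq_sub l]
  norm_num [Finset.sum_add_distrib]

theorem mem_confOf {C : ClusteringS d} {x : Pt d} : x ∈ confOf d C ↔ ∃ i, x ∈ C.2 i := by
  simp [confOf]

theorem mem_others {k : ℕ} {C : Fin k → Finset (Pt d)} {i : Fin k} {x : Pt d} :
    x ∈ others d C i ↔ ∃ j ≠ i, x ∈ C j := by
  simp only [others, Finset.mem_biUnion, Finset.mem_univ, true_and]
  refine exists_congr fun j => ?_
  split_ifs with h <;> simp [h]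

theorem setDist_le_dist0 {A B : Finset (Pt d)} {x y : Pt d} (hx : x ∈ A) (hy : y ∈ B) :
    setDist d A B ≤ dist0 d x y :=
  csInf_le ⟨0, by rintro _ ⟨_, _, _, _, rfl⟩; exact Real.sqrt_nonneg _⟩ ⟨x, hx, y, hy, rfl⟩

theorem sep_le_dist0 {k : ℕ} {C : Fin k → Finset (Pt d)} {i j : Fin k} (hij : i ≠ j)
    {x y : Pt d} (hx : x ∈ C i) (hy : y ∈ C j) : sep d C ≤ dist0 d x y :=
  (ciInf_le (Set.finite_range _).bddBelow i).trans
    (setDist_le_dist0 hx (mem_others.mpr ⟨j, hij.symm, hy⟩))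

theorem exists_add_single_notMem_confOf (hd : 0 < d) {C : ClusteringS d}
    (hcard : ∀ i, (C.2 i).card < d)
    (hsep : ∀ i j, i ≠ j → ∀ x ∈ C.2 i, ∀ y ∈ C.2 j, √2 < dist0 d x y) (z : Pt d) :
    ∃ i, z + Pi.single i 1 ∉ confOf d C := by
  by_contra! hall
  choose g hg using fun i => mem_confOf.mp (hall i)
  have hsame (i) : g i = g ⟨0, hd⟩ := by
    by_contra hne
    exact (hsep _ _ hne _ (hg i) _ (hg _)).ne' (dist0_add_single (ne_of_apply_ne g hne) z)
  have hinj : Function.Injective fun i : Fin d => z + (Pi.single i 1 : Pt d) :=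
    fun i j hij => by_contra fun hne => by simpa [hne] using congrFun (add_left_cancel hij) i
  refine (hcard (g ⟨0, hd⟩)).not_ge ?_
  calc d = (Finset.univ.image fun i => z + Pi.single i 1).card := by
        rw [Finset.card_image_of_injective _ hinj, Finset.card_fin]
    _ ≤ (C.2 (g ⟨0, hd⟩)).card :=
        Finset.card_le_card (Finset.image_subset_iff.mpr fun i _ => hsame i ▸ hg i)

theorem sqrt_two_lt_of_exp_max_le {a b c : ℝ} (hb : 1 < b)
    (ha : Real.exp (max (100 * b) c) ≤ a) : √2 < a :=
  calc
    √2 < 100 := by rw [Real.sqrt_lt'] <;> norm_num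
    _ ≤ max (100 * b) c := le_max_of_le_left (by linarith)
    _ ≤ Real.exp (max (100 * b) c) := by linarith [Real.add_one_le_exp (max (100 * b) c)]
    _ ≤ a := ha

theorem esc_pass_general (hd : 3 ≤ d) (C : ClusteringS d) (hcard : ∀ i, (C.2 i).card < d)
    (hsep : ∀ i j, i ≠ j → ∀ x ∈ C.2 i, ∀ y ∈ C.2 j, √2 < dist0 d x y) :
    ∀ x ∈ confOf d C, 0 < esc d (↑(confOf d C)) x := by
  intro x hx
  rw [esc_of_mem hx]
  exact escapeProb_pos_of_forall_exists_notMem hd (confOf d C).finite_toSet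
    (exists_add_single_notMem_confOf (by omega) hcard hsep) x

end

/-- If `C` is an `(a,b)` separated DOT clustering of an `n`-element configuration in `ℤ^d`,
`d ≥ 5`, `n ≥ 4`, with `a ≥ e^{max{100b, 10d²}}`, then any element which can escape from
its own cluster can escape from the whole configuration `π(C)`. -/
theorem esc_pass (d n : ℕ) (hd : 5 ≤ d) (hn : 4 ≤ n) (a b : ℝ)
    (ha1 : 1 < a) (hb : 1 < b)
    (ha : Real.exp (max (100 * b) (10 * (d : ℝ) ^ 2)) ≤ a)
    (C : ClusteringS d) (hC : IsClusteringConf d n C) (hdot : IsDOT d C.2 a b) :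
    ∀ (i : Fin C.1) (x : Pt d), x ∈ C.2 i →
      0 < esc d (↑(C.2 i)) x → 0 < esc d (↑(confOf d C)) x := by
  intro i x hx _
  refine esc_pass_general (by omega) C (fun j => by have := hdot.1 j; omega)
    (fun j l hjl y hy z hz => ?_) x (mem_confOf.mpr ⟨i, hx⟩)
  exact (sqrt_two_lt_of_exp_max_le hb ha).trans_le (hdot.2.1.trans (sep_le_dist0 hjl hy hz))

end HATFormal
end

section
/- For all integers 3 ≤ d ≤ d', G_{d'}(o) ≤ G_d(o); that is, the Green's function of simple random walk at the origin is a nonincreasing function of the dimension d ≥ 3. -/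
open MeasureTheory

namespace HATFormal

/-!
Run the walk at the jumps of a rate one Poisson process. The expected time spent at the origin is
still `G_d(o)`, but the `d` coordinates are now independent walks on `ℤ` with jump rate `1 / d`, so
`G_d(o) = ∫₀^∞ h (s / d) ^ d ds`, where `h u = e⁻ᵘ I₀(u)` is the return probability at time `u` of
the walk on `ℤ` with jump rate one. As `h u` is the integral of `exp (u (cos 2πx - 1))` over the
circle, `h (s / d) ^ d` is the `L^{1/d}` quasinorm of `exp (s (cos 2πx - 1))` over a probability
space, which is nonincreasing in `d` by Jensen's inequality. For `d ≥ 3` the integral converges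
because `h u = O(u ^ (-1 / 2))`.
-/

open ProbabilityTheory UnitAddTorus
open scoped ENNReal

section Moments

variable {Ω : Type*} {mΩ : MeasurableSpace Ω} {μ : Measure Ω} {X : Ω → ℝ}

lemma mgf_rpow_le_mgf_mul [IsProbabilityMeasure μ] {r t : ℝ} (hr : 1 ≤ r)
    (hint : Integrable (fun ω ↦ Real.exp (r * t * X ω)) μ) :
    mgf X μ t ^ r ≤ mgf X μ (r * t) := by
  have hexp : ∀ ω, Real.exp (t * X ω) ^ r = Real.exp (r * t * X ω) := fun ω ↦ by
    rw [← Real.exp_mul]; ring_nf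
  by_cases h : Integrable (fun ω ↦ Real.exp (t * X ω)) μ
  · calc mgf X μ t ^ r ≤ ∫ ω, Real.exp (t * X ω) ^ r ∂μ :=
          (convexOn_rpow hr).map_integral_le
            (Real.continuous_rpow_const (by linarith)).continuousOn isClosed_Ici
            (ae_of_all _ fun ω ↦ (Real.exp_pos _).le) h
            (hint.congr (ae_of_all _ fun ω ↦ (hexp ω).symm))
      _ = mgf X μ (r * t) := by simp_rw [hexp, mgf]
  · rw [mgf_undef h, Real.zero_rpow (by linarith)]
    exact mgf_nonneg

lemma hasSum_mgf_of_ae_abs_le [IsFiniteMeasure μ] {C : ℝ} (hX : AEMeasurable X μ)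
    (hC : ∀ᵐ ω ∂μ, |X ω| ≤ C) (t : ℝ) :
    HasSum (fun n : ℕ ↦ t ^ n / n.factorial * ∫ ω, X ω ^ n ∂μ) (mgf X μ t) := by
  have hbound : ∀ n : ℕ, ∀ᵐ ω ∂μ,
      ‖(t * X ω) ^ n / n.factorial‖ ≤ (|t| * C) ^ n / n.factorial := by
    intro n
    filter_upwards [hC] with ω hω
    rw [norm_div, norm_pow, norm_mul, Real.norm_eq_abs, Real.norm_eq_abs, RCLike.norm_natCast]
    gcongr
  have hint : ∀ n : ℕ, Integrable (fun ω ↦ (t * X ω) ^ n / n.factorial) μ := fun n ↦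
    Integrable.of_bound (by fun_prop) _ (hbound n)
  have hsummable : Summable fun n : ℕ ↦ ∫ ω, ‖(t * X ω) ^ n / n.factorial‖ ∂μ := by
    refine Summable.of_nonneg_of_le (fun n ↦ by positivity) (fun n ↦ ?_)
      ((Real.summable_pow_div_factorial (|t| * C)).mul_left (μ.real Set.univ))
    calc ∫ ω, ‖(t * X ω) ^ n / n.factorial‖ ∂μ ≤ ∫ _, (|t| * C) ^ n / n.factorial ∂μ :=
          integral_mono_ae (hint n).norm (integrable_const _) (hbound n)
      _ = μ.real Set.univ * ((|t| * C) ^ n / n.factorial) := by simp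
  have hterm : ∀ n : ℕ, t ^ n / n.factorial * ∫ ω, X ω ^ n ∂μ =
      ∫ ω, (t * X ω) ^ n / n.factorial ∂μ := fun n ↦ by
    rw [← integral_const_mul]
    congr with ω
    ring
  have hmgf : mgf X μ t = ∫ ω, ∑' n : ℕ, (t * X ω) ^ n / n.factorial ∂μ := by
    simp_rw [mgf, Real.exp_eq_exp_ℝ, NormedSpace.exp_eq_tsum_div]
  simp_rw [hterm, hmgf]
  exact hasSum_integral_of_summable_integral_norm hint hsummable

end Moments

section BorelSummation

lemma lintegral_exp_neg_mul_pow (n : ℕ) :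
    ∫⁻ s in Set.Ioi (0 : ℝ), ENNReal.ofReal (Real.exp (-s) * s ^ n) =
      ENNReal.ofReal n.factorial := by
  have hint := Real.GammaIntegral_convergent (s := n + 1) (by positivity)
  have hΓ := Real.Gamma_eq_integral (s := n + 1) (by positivity)
  simp only [add_sub_cancel_right, Real.rpow_natCast] at hint hΓ
  rw [← Real.Gamma_nat_eq_factorial, hΓ, ofReal_integral_eq_lintegral_ofReal hint]
  filter_upwards [ae_restrict_mem measurableSet_Ioi] with s (hs : 0 < s)
  positivity

lemma tsum_ofReal_eq_lintegral_exp_neg_mul {a : ℕ → ℝ} {F : ℝ → ℝ} (ha : ∀ n, 0 ≤ a n)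
    (hF : ∀ s, 0 < s → HasSum (fun n ↦ s ^ n / n.factorial * a n) (F s)) :
    ∑' n, ENNReal.ofReal (a n) =
      ∫⁻ s in Set.Ioi (0 : ℝ), ENNReal.ofReal (Real.exp (-s) * F s) := by
  have hterm : ∀ n, ENNReal.ofReal (a n) = ∫⁻ s in Set.Ioi (0 : ℝ),
      ENNReal.ofReal (a n / n.factorial) * ENNReal.ofReal (Real.exp (-s) * s ^ n) := by
    intro n
    rw [lintegral_const_mul _ (by fun_prop), lintegral_exp_neg_mul_pow,
      ← ENNReal.ofReal_mul (div_nonneg (ha n) (by positivity)),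
      div_mul_cancel₀ _ (by positivity)]
  rw [tsum_congr hterm, ← lintegral_tsum fun n ↦ by fun_prop]
  refine setLIntegral_congr_fun measurableSet_Ioi fun s (hs : 0 < s) ↦ ?_
  have hsum := (hF s hs).mul_left (Real.exp (-s))
  rw [← hsum.tsum_eq, ENNReal.ofReal_tsum_of_nonneg (fun n ↦ ?_) hsum.summable]
  · refine tsum_congr fun n ↦ ?_
    rw [← ENNReal.ofReal_mul (div_nonneg (ha n) (by positivity))]
    ring_nf
  · have := ha n
    positivity

end BorelSummation

section Circle

instance isProbabilityMeasure_unitAddCircle :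
    IsProbabilityMeasure (volume : Measure UnitAddCircle) :=
  ⟨UnitAddCircle.measure_univ⟩

lemma integral_fourier (n : ℤ) :
    ∫ x : UnitAddCircle, fourier n x = if n = 0 then 1 else 0 := by
  split_ifs with hn
  · simp [hn]
  · exact integral_eq_zero_of_add_right_eq_neg (fourier_add_half_inv_index hn one_pos)

lemma integral_mFourier {ι : Type*} [Fintype ι] (n : ι → ℤ) :
    ∫ θ : UnitAddTorus ι, mFourier n θ = if n = 0 then 1 else 0 := by
  simp only [mFourier, ContinuousMap.coe_mk]
  rw [integral_fintype_prod_volume_eq_prod (fun i (x : UnitAddCircle) ↦ fourier (n i) x)]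
  simp only [integral_fourier, Finset.prod_ite_zero, Finset.mem_univ, true_imp_iff,
    Finset.prod_const_one, funext_iff, Pi.zero_apply]

/-- The function `x ↦ cos (2πx)` on `ℝ / ℤ`, the characteristic function of the steps of simple
random walk on `ℤ`. -/
noncomputable def circleCos (x : UnitAddCircle) : ℝ := (fourier 1 x).re

lemma circleCos_coe (x : ℝ) : circleCos x = Real.cos (2 * Real.pi * x) := by
  rw [circleCos, fourier_coe_apply, ← Complex.exp_ofReal_mul_I_re]
  push_cast
  ring_nf

lemma continuous_circleCos : Continuous circleCos :=
  Complex.continuous_re.comp (fourier 1).continuous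

lemma abs_circleCos_le_one (x : UnitAddCircle) : |circleCos x| ≤ 1 :=
  (Complex.abs_re_le_norm _).trans_eq (by rw [fourier_apply, Circle.norm_coe])

end Circle

section HeatKernel

/-- The return probability `e⁻ᵘ I₀(u)` at time `u` of the continuous-time simple random walk on `ℤ`
with jump rate `1`, in its Fourier representation `∫ exp (u (cos 2πx - 1)) dx`. -/
noncomputable def heatReturn (u : ℝ) : ℝ :=
  mgf (fun x ↦ circleCos x - 1) (volume : Measure UnitAddCircle) u

lemma integrable_exp_mul_circleCos_sub_one (u : ℝ) :
    Integrable fun x ↦ Real.exp (u * (circleCos x - 1)) := by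
  have := continuous_circleCos
  exact Continuous.integrable_of_hasCompactSupport (by fun_prop) (.of_compactSpace _)

lemma heatReturn_nonneg (u : ℝ) : 0 ≤ heatReturn u := mgf_nonneg

lemma heatReturn_div_pow_le {d d' : ℕ} (hd : 0 < d) (hdd' : d ≤ d') (s : ℝ) :
    heatReturn (s / d') ^ d' ≤ heatReturn (s / d) ^ d := by
  have hd₀ : (0 : ℝ) < d := by exact_mod_cast hd
  have hd'₀ : (0 : ℝ) < d' := by exact_mod_cast hd.trans_le hdd'
  have hratio : (1 : ℝ) ≤ d' / d := (one_le_div hd₀).2 (by exact_mod_cast hdd')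
  have hscale : (d' / d : ℝ) * (s / d') = s / d := by field_simp
  calc heatReturn (s / d') ^ d' = (heatReturn (s / d') ^ (d' / d : ℝ)) ^ d := by
        rw [← Real.rpow_mul_natCast (heatReturn_nonneg _), div_mul_cancel₀ _ hd₀.ne',
          Real.rpow_natCast]
    _ ≤ heatReturn (d' / d * (s / d')) ^ d := by
        have hnonneg := heatReturn_nonneg (s / d')
        gcongr
        exact mgf_rpow_le_mgf_mul hratio (integrable_exp_mul_circleCos_sub_one _)
    _ = heatReturn (s / d) ^ d := by rw [hscale]

lemma cos_two_pi_mul_sub_one_le {x : ℝ} (hx : |x| ≤ 1 / 2) :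
    Real.cos (2 * Real.pi * x) - 1 ≤ -8 * x ^ 2 := by
  have hpi := Real.pi_pos
  have habs : |2 * Real.pi * x| ≤ Real.pi := by
    rw [abs_mul, abs_of_pos (by positivity)]
    nlinarith
  calc Real.cos (2 * Real.pi * x) - 1 ≤ -(2 / Real.pi ^ 2 * (2 * Real.pi * x) ^ 2) := by
        linarith [Real.cos_le_one_sub_mul_cos_sq habs]
    _ = -8 * x ^ 2 := by field_simp; ring

lemma heatReturn_le_sqrt {u : ℝ} (hu : 0 < u) : heatReturn u ≤ √(Real.pi / (8 * u)) := by
  have hgauss : Integrable fun x : ℝ ↦ Real.exp (-(8 * u) * x ^ 2) :=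
    integrable_exp_neg_mul_sq (by positivity)
  calc heatReturn u
      = ∫ x in Set.Ioc (-(1 / 2) : ℝ) (1 / 2), Real.exp (u * (Real.cos (2 * Real.pi * x) - 1)) := by
        rw [heatReturn, mgf, ← UnitAddCircle.integral_preimage (-(1 / 2))]
        simp only [circleCos_coe]
        norm_num
    _ ≤ ∫ x in Set.Ioc (-(1 / 2) : ℝ) (1 / 2), Real.exp (-(8 * u) * x ^ 2) := by
        refine setIntegral_mono_on (Continuous.integrableOn_Ioc (by fun_prop))
          hgauss.integrableOn measurableSet_Ioc fun x hx ↦ Real.exp_le_exp.2 ?_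
        nlinarith [cos_two_pi_mul_sub_one_le (abs_le.2 ⟨hx.1.le, hx.2⟩)]
    _ ≤ ∫ x : ℝ, Real.exp (-(8 * u) * x ^ 2) :=
        setIntegral_le_integral hgauss (ae_of_all _ fun x ↦ (Real.exp_pos _).le)
    _ = √(Real.pi / (8 * u)) := integral_gaussian _

lemma heatReturn_le_exp_two_mul (u : ℝ) : heatReturn u ≤ Real.exp 2 * heatReturn (1 + u) := by
  rw [heatReturn, heatReturn, mgf, mgf, ← integral_const_mul]
  refine integral_mono (integrable_exp_mul_circleCos_sub_one _)
    ((integrable_exp_mul_circleCos_sub_one _).const_mul _) fun x ↦ ?_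
  beta_reduce
  rw [← Real.exp_add, Real.exp_le_exp]
  linarith [(abs_le.1 (abs_circleCos_le_one x)).1]

/-- Shifting the time by `1` makes the Gaussian bound integrable up to time `0`. -/
lemma heatReturn_le_rpow {u : ℝ} (hu : 0 ≤ u) :
    heatReturn u ≤ Real.exp 2 * √(Real.pi / 8) * (1 + u) ^ (-(1 / 2) : ℝ) := by
  calc heatReturn u ≤ Real.exp 2 * heatReturn (1 + u) := heatReturn_le_exp_two_mul u
    _ ≤ Real.exp 2 * √(Real.pi / (8 * (1 + u))) := by
        gcongr
        exact heatReturn_le_sqrt (by positivity)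
    _ = Real.exp 2 * √(Real.pi / 8) * (1 + u) ^ (-(1 / 2) : ℝ) := by
        rw [← div_div, Real.sqrt_div (by positivity), Real.rpow_neg (by positivity),
          ← Real.sqrt_eq_rpow]
        ring

lemma lintegral_heatReturn_pow_lt_top {d : ℕ} (hd : 3 ≤ d) :
    ∫⁻ s in Set.Ioi (0 : ℝ), ENNReal.ofReal (heatReturn (s / d) ^ d) < ∞ := by
  have hd₀ : (d : ℝ) ≠ 0 := by positivity
  have hdecay : (Module.finrank ℝ ℝ : ℝ) < d / 2 := by
    have : (3 : ℝ) ≤ d := by exact_mod_cast hd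
    rw [Module.finrank_self, Nat.cast_one]
    linarith
  have hint : Integrable fun s : ℝ ↦
      (Real.exp 2 * √(Real.pi / 8)) ^ d * (1 + ‖s / d‖) ^ (-(d / 2) : ℝ) :=
    ((integrable_one_add_norm hdecay).comp_div hd₀).const_mul _
  refine (setLIntegral_mono' measurableSet_Ioi fun s (hs : 0 < s) ↦ ?_).trans_lt
    hint.integrableOn.lintegral_lt_top
  refine ENNReal.ofReal_le_ofReal ?_
  have hs' : 0 ≤ s / d := by positivity
  calc heatReturn (s / d) ^ d
      ≤ (Real.exp 2 * √(Real.pi / 8) * (1 + s / d) ^ (-(1 / 2) : ℝ)) ^ d :=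
        pow_le_pow_left₀ (heatReturn_nonneg _) (heatReturn_le_rpow hs') d
    _ = (Real.exp 2 * √(Real.pi / 8)) ^ d * (1 + ‖s / d‖) ^ (-(d / 2) : ℝ) := by
        rw [mul_pow, Real.norm_of_nonneg hs', ← Real.rpow_mul_natCast (by positivity)]
        ring_nf

end HeatKernel

section Walk

variable {d t : ℕ}

/-- The unit steps `Dir d` as a finset, indexed by a coordinate direction and a sign. -/
def dirs (d : ℕ) : Finset (Pt d) :=
  Finset.univ.image fun p : Fin d × ℤˣ ↦ Pi.single p.1 (p.2 : ℤ)

lemma mem_dirs {e : Pt d} : e ∈ dirs d ↔ e ∈ Dir d := by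
  simp only [dirs, Dir, Finset.mem_image, Finset.mem_univ, true_and, Prod.exists,
    Set.mem_ofPred_eq]
  refine exists_congr fun i ↦ ⟨?_, ?_⟩
  · rintro ⟨u, rfl⟩
    exact (Int.units_eq_one_or u).imp (fun h ↦ by simp [h]) (fun h ↦ by simp [h])
  · rintro (rfl | rfl)
    exacts [⟨1, rfl⟩, ⟨-1, rfl⟩]

lemma sum_dirs {M : Type*} [AddCommMonoid M] (f : Pt d → M) :
    ∑ e ∈ dirs d, f e = ∑ i, (f (Pi.single i 1) + f (Pi.single i (-1))) := by
  have hinj : Function.Injective fun p : Fin d × ℤˣ ↦ (Pi.single p.1 (p.2 : ℤ) : Pt d) := by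
    rintro ⟨i, u⟩ ⟨j, v⟩ h
    have hij : i = j := by
      by_contra hij
      simpa [hij] using congrFun h i
    subst hij
    exact Prod.ext rfl (Units.ext (Pi.single_injective i h))
  rw [dirs, Finset.sum_image hinj.injOn, Fintype.sum_prod_type]
  refine Finset.sum_congr rfl fun i _ ↦ ?_
  rw [UnitsInt.univ, Finset.sum_pair (by decide)]
  rfl

/-- The characteristic function `θ ↦ d⁻¹ ∑ᵢ cos (2πθᵢ)` of the steps of simple random walk on
`ℤ^d`. -/
noncomputable def stepChar (d : ℕ) (θ : UnitAddTorus (Fin d)) : ℝ := (∑ i, circleCos (θ i)) / d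

lemma continuous_stepChar : Continuous (stepChar d) := by
  have := continuous_circleCos
  unfold stepChar
  fun_prop

lemma abs_stepChar_le_one (θ : UnitAddTorus (Fin d)) : |stepChar d θ| ≤ 1 := by
  rw [stepChar, abs_div, Nat.abs_cast]
  refine div_le_one_of_le₀ ?_ d.cast_nonneg
  calc |∑ i, circleCos (θ i)| ≤ ∑ i, |circleCos (θ i)| := Finset.abs_sum_le_sum_abs _ _
    _ ≤ ∑ _ : Fin d, (1 : ℝ) := Finset.sum_le_sum fun i _ ↦ abs_circleCos_le_one _
    _ = d := by simp

lemma sum_dirs_mFourier (θ : UnitAddTorus (Fin d)) :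
    ∑ e ∈ dirs d, mFourier e θ = ((2 * ∑ i, circleCos (θ i) : ℝ) : ℂ) := by
  rw [sum_dirs, Finset.mul_sum, Complex.ofReal_sum]
  refine Finset.sum_congr rfl fun i _ ↦ ?_
  rw [Pi.single_neg, mFourier_neg, mFourier_single, Complex.add_conj, circleCos]

lemma mFourier_sum {ι κ : Type*} [Fintype ι] (S : Finset κ) (n : κ → ι → ℤ)
    (θ : UnitAddTorus ι) : mFourier (∑ k ∈ S, n k) θ = ∏ k ∈ S, mFourier (n k) θ := by
  induction S using Finset.cons_induction with
  | empty => simp [mFourier_zero]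
  | cons k S hk ih => rw [Finset.sum_cons, Finset.prod_cons, mFourier_add, ih]

lemma natCard_walk_eq_integral (x : Pt d) :
    (Nat.card {s : Fin t → Pt d // (∀ i, s i ∈ Dir d) ∧ wpos d x s t = 0} : ℂ) =
      ∫ θ, mFourier x θ * (∑ e ∈ dirs d, mFourier e θ) ^ t := by
  have hcard : Nat.card {s : Fin t → Pt d // (∀ i, s i ∈ Dir d) ∧ wpos d x s t = 0} =
      ((Fintype.piFinset fun _ : Fin t ↦ dirs d).filter fun s ↦ x + ∑ i, s i = 0).card :=
    Nat.subtype_card _ fun s ↦ by simp [mem_dirs, wpos]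
  rw [hcard, Finset.card_filter]
  push_cast
  simp_rw [← integral_mFourier, Finset.sum_pow', Finset.mul_sum]
  rw [integral_finsetSum]
  · simp_rw [mFourier_add, mFourier_sum]
  · intro s _
    exact Continuous.integrable_of_hasCompactSupport (by fun_prop) (.of_compactSpace _)

lemma prob_return_eq_integral (d t : ℕ) :
    prob d t (fun s ↦ wpos d 0 s t = 0) = ∫ θ, stepChar d θ ^ t := by
  have hcard := natCard_walk_eq_integral (d := d) (t := t) 0
  simp_rw [mFourier_zero, ContinuousMap.one_apply, one_mul, sum_dirs_mFourier] at hcard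
  norm_cast at hcard
  rw [prob, hcard, ← integral_div]
  refine integral_congr_ae (ae_of_all _ fun θ ↦ ?_)
  beta_reduce
  rw [← div_pow, Nat.cast_mul, Nat.cast_two, mul_div_mul_left _ _ two_ne_zero, stepChar]

lemma exp_neg_mul_mgf_stepChar (hd : d ≠ 0) (s : ℝ) :
    Real.exp (-s) * mgf (stepChar d) volume s = heatReturn (s / d) ^ d := by
  have hprod : ∀ θ : UnitAddTorus (Fin d), Real.exp (-s) * Real.exp (s * stepChar d θ) =
      ∏ i, Real.exp (s / d * (circleCos (θ i) - 1)) := by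
    intro θ
    rw [← Real.exp_add, ← Real.exp_sum, ← Finset.mul_sum, Finset.sum_sub_distrib, stepChar]
    simp only [Finset.sum_const, Finset.card_univ, Fintype.card_fin, nsmul_eq_mul, mul_one]
    field_simp
    ring_nf
  rw [mgf, ← integral_const_mul]
  simp_rw [hprod]
  rw [integral_fintype_prod_volume_eq_pow
    (fun x : UnitAddCircle ↦ Real.exp (s / d * (circleCos x - 1))), Fintype.card_fin, heatReturn,
    mgf]

lemma prob_nonneg {T : ℕ} (P : (Fin T → Pt d) → Prop) : 0 ≤ prob d T P := by
  unfold prob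
  positivity

lemma green_zero_eq_lintegral (hd : d ≠ 0) :
    green d 0 =
      (∫⁻ s in Set.Ioi (0 : ℝ), ENNReal.ofReal (heatReturn (s / d) ^ d)).toReal := by
  have hexpand : ∀ s, 0 < s → HasSum
      (fun t ↦ s ^ t / t.factorial * prob d t (fun e ↦ wpos d 0 e t = 0))
      (mgf (stepChar d) volume s) := fun s _ ↦ by
    simpa only [prob_return_eq_integral] using hasSum_mgf_of_ae_abs_le
      continuous_stepChar.aemeasurable (ae_of_all _ abs_stepChar_le_one) s
  simp_rw [← exp_neg_mul_mgf_stepChar hd]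
  rw [← tsum_ofReal_eq_lintegral_exp_neg_mul (fun t ↦ prob_nonneg _) hexpand,
    ENNReal.tsum_toReal_eq fun t ↦ ENNReal.ofReal_ne_top]
  simp_rw [ENNReal.toReal_ofReal (prob_nonneg _), green]

end Walk

/-- The Green's function of simple random walk at the origin is a nonincreasing function
of the dimension `d ≥ 3`. -/
theorem green_mono (d d' : ℕ) (hd : 3 ≤ d) (hdd : d ≤ d') :
    green d' 0 ≤ green d 0 := by
  rw [green_zero_eq_lintegral (by omega), green_zero_eq_lintegral (by omega)]
  refine ENNReal.toReal_mono (lintegral_heatReturn_pow_lt_top hd).ne ?_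
  exact lintegral_mono fun s ↦
    ENNReal.ofReal_le_ofReal (heatReturn_div_pow_le (by omega) hdd s)

end HATFormal
end

section
/- For every integer d ≥ 5, the Green's function of simple random walk on Z^d at the origin satisfies G_d(o) ≤ 1.2. -/
open MeasureTheory

namespace HATFormal

/-
By Fourier inversion on `(ℤ/M)^d`, the probability that the walk is back at its starting point
modulo `M` at time `T` is the `T`-th moment of the mean of `d` independent samples of `cos (2πk/M)`.
By Jensen's inequality the even moments decrease in `d`, so `d = 5` is the worst case. For
`M > 2 * n`, expanding the `2n`-th moment into moments of single cosines, which are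
`centralBinom n / 4 ^ n`, gives
`centralBinom n / 4 ^ n * ∑ l, (multinomial l / d ^ n) ^ 2` over all `l : Fin d → ℕ` with total `n`,
and the squares are controlled by the largest multinomial coefficient, attained at a balanced `l`.
For `d = 5` the resulting explicit sequence has rational ratios of consecutive terms, and a
potential of the form `(α * k + β) * (term 5 * k)` shows that its sum is at most `1.2`.
-/

open Finset
open scoped BigOperators Nat

section Moments

variable {κ : Type*} [Fintype κ]

lemma expect_pi_prod {ι K : Type*} [Fintype ι] [DecidableEq ι] [Semifield K] [CharZero K]
    (g : ι → κ → K) : 𝔼 k : ι → κ, ∏ i, g i (k i) = ∏ i, 𝔼 a, g i a := by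
  simp only [Fintype.expect_eq_sum_div_card, prod_div_distrib, Fintype.prod_sum, prod_const,
    card_univ, Fintype.card_fun, Nat.cast_pow]

lemma even_pow_expect_le {ι : Type*} [Fintype ι] [Nonempty ι] (x : ι → ℝ) {T : ℕ} (hT : Even T) :
    (𝔼 i, x i) ^ T ≤ 𝔼 i, x i ^ T := by
  have hcard : (Fintype.card ι : ℝ) ≠ 0 := Nat.cast_ne_zero.2 Fintype.card_ne_zero
  have jensen := Real.pow_arith_mean_le_arith_mean_pow_of_even univ
    (fun _ => (Fintype.card ι : ℝ)⁻¹) x (fun _ _ => by positivity) (by simp [hcard]) hT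
  simpa only [Fintype.expect_eq_sum_div_card, div_eq_inv_mul, mul_sum] using jensen

lemma expect_expect_succAbove {d : ℕ} (hd : d ≠ 0) (x : Fin (d + 1) → ℝ) :
    𝔼 j : Fin (d + 1), 𝔼 i : Fin d, x (j.succAbove i) = 𝔼 i, x i := by
  have sum_succAbove (j : Fin (d + 1)) : ∑ i, x (j.succAbove i) = ∑ i, x i - x j := by
    rw [Fin.sum_univ_succAbove x j, add_sub_cancel_left]
  simp only [Fintype.expect_eq_sum_div_card, sum_succAbove, ← sum_div, sum_sub_distrib, sum_const,
    card_univ, Fintype.card_fin, nsmul_eq_mul]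
  push_cast
  field_simp
  ring

lemma expect_comp_succAbove [Nonempty κ] {d : ℕ} (j : Fin (d + 1)) (F : (Fin d → κ) → ℝ) :
    𝔼 k : Fin (d + 1) → κ, F (fun i => k (j.succAbove i)) = 𝔼 k, F k := by
  calc 𝔼 k : Fin (d + 1) → κ, F (fun i => k (j.succAbove i))
      = 𝔼 p : κ × (Fin d → κ), F p.2 :=
        Fintype.expect_equiv (Fin.insertNthEquiv (fun _ => κ) j).symm _ _ fun _ => rfl
    _ = 𝔼 _a : κ, 𝔼 k, F k := by rw [← univ_product_univ, expect_product]
    _ = 𝔼 k, F k := Fintype.expect_const _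

/-- The `T`-th moment of the mean of `d` independent samples of `f`, each taken at a uniformly
random point of the finite type `κ`. -/
noncomputable def meanMoment (f : κ → ℝ) (d T : ℕ) : ℝ := 𝔼 k : Fin d → κ, (𝔼 i, f (k i)) ^ T

/- The mean of `d + 1` samples is the average of its `d + 1` leave-one-out means, so Jensen's
inequality for the convex function `x ↦ x ^ T` applies. -/
lemma antitoneOn_meanMoment [Nonempty κ] (f : κ → ℝ) {T : ℕ} (hT : Even T) :
    AntitoneOn (fun d => meanMoment f d T) (Set.Ici 1) := by
  refine antitoneOn_nat_Ici_of_succ_le fun d hd => ?_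
  have hd0 : d ≠ 0 := Nat.one_le_iff_ne_zero.1 hd
  calc meanMoment f (d + 1) T
      = 𝔼 k : Fin (d + 1) → κ, (𝔼 j : Fin (d + 1), 𝔼 i : Fin d, f (k (j.succAbove i))) ^ T :=
        expect_congr rfl fun k _ => by rw [← expect_expect_succAbove hd0 fun i => f (k i)]
    _ ≤ 𝔼 k : Fin (d + 1) → κ, 𝔼 j : Fin (d + 1), (𝔼 i : Fin d, f (k (j.succAbove i))) ^ T :=
        expect_le_expect fun k _ => even_pow_expect_le _ hT
    _ = 𝔼 j : Fin (d + 1), 𝔼 k : Fin (d + 1) → κ, (𝔼 i : Fin d, f (k (j.succAbove i))) ^ T :=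
        expect_comm _ _ _
    _ = 𝔼 _j : Fin (d + 1), meanMoment f d T :=
        expect_congr rfl fun j _ => expect_comp_succAbove j fun k => (𝔼 i, f (k i)) ^ T
    _ = meanMoment f d T := Fintype.expect_const _

lemma meanMoment_eq_sum_piAntidiag (f : κ → ℝ) (d T : ℕ) :
    meanMoment f d T = (∑ m ∈ piAntidiag (univ : Finset (Fin d)) T,
      Nat.multinomial univ m * ∏ i, 𝔼 a, f a ^ m i) / d ^ T := by
  have expect_monomial (m : Fin d → ℕ) :
      𝔼 k : Fin d → κ, ∏ i, f (k i) ^ m i = ∏ i, 𝔼 a, f a ^ m i :=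
    expect_pi_prod fun i a => f a ^ m i
  simp only [meanMoment, Fintype.expect_eq_sum_div_card (fun _ : Fin d => f _), div_pow,
    Fintype.card_fin, sum_pow_eq_sum_piAntidiag, ← expect_div, expect_sum_comm, ← mul_expect,
    expect_monomial]

end Moments

section Multinomial

lemma multinomial_two_mul_mul_prod_centralBinom {ι : Type*} (s : Finset ι) (l : ι → ℕ) :
    Nat.multinomial s (fun i => 2 * l i) * ∏ i ∈ s, (l i).centralBinom =
      (∑ i ∈ s, l i).centralBinom * Nat.multinomial s l ^ 2 := by
  have factorial_two_mul (n : ℕ) : (2 * n)! = n.centralBinom * n ! ^ 2 := by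
    rw [Nat.centralBinom, ← Nat.choose_mul_factorial_mul_factorial (by lia : n ≤ 2 * n),
      show 2 * n - n = n by lia]
    ring
  have spec_double : (∏ i ∈ s, (l i).centralBinom) * (∏ i ∈ s, (l i)!) ^ 2 *
      Nat.multinomial s (fun i => 2 * l i) = (∑ i ∈ s, l i).centralBinom * (∑ i ∈ s, l i)! ^ 2 := by
    simpa only [← mul_sum, factorial_two_mul, prod_mul_distrib,
      prod_pow] using Nat.multinomial_spec s fun i => 2 * l i
  have hpos : 0 < (∏ i ∈ s, (l i)!) ^ 2 := by positivity
  refine Nat.eq_of_mul_eq_mul_left hpos ?_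
  rw [← Nat.multinomial_spec] at spec_double
  linarith

/- Remove the units of `l` one at a time: while the total is `j + 1`, some entry is at least
`j / card ι + 1` by the pigeonhole principle. -/
lemma prod_div_card_le_prod_factorial {ι : Type*} [Fintype ι] [Nonempty ι] (l : ι → ℕ) :
    ∏ j ∈ range (∑ i, l i), (j / Fintype.card ι + 1) ≤ ∏ i, (l i)! := by
  classical
  induction hn : ∑ i, l i generalizing l with
  | zero => exact Nat.succ_le_of_lt (prod_pos fun i _ => (l i).factorial_pos)
  | succ n ih =>
    obtain ⟨i, -, hi⟩ : ∃ i ∈ univ, n / Fintype.card ι < l i := by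
      refine exists_lt_of_sum_lt ?_
      rw [hn, sum_const, card_univ, smul_eq_mul]
      exact Nat.lt_succ_of_le (Nat.mul_div_le n _)
    have single_le : Pi.single i 1 ≤ l := by
      intro j
      obtain rfl | hj := eq_or_ne j i
      · simpa using Nat.one_le_of_lt hi
      · simp [hj]
    obtain ⟨l, rfl⟩ : ∃ l' : ι → ℕ, l = l' + Pi.single i 1 :=
      ⟨l - Pi.single i 1, (tsub_add_cancel_of_le single_le).symm⟩
    have hsum : ∑ j, l j = n := by simpa [sum_add_distrib] using hn
    have factorial_add_single (j : ι) :
        ((l + Pi.single i 1 : ι → ℕ) j)! = (l j)! * if j = i then l i + 1 else 1 := by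
      obtain rfl | hj := eq_or_ne j i
      · simp [Nat.factorial_succ, mul_comm]
      · simp [hj]
    simp only [prod_range_succ, factorial_add_single, prod_mul_distrib, prod_ite_eq', mem_univ,
      if_true]
    exact Nat.mul_le_mul (ih l hsum) (by simpa using hi)

lemma sum_piAntidiag_two_mul {ι : Type*} [Fintype ι] [DecidableEq ι] {R : Type*}
    [AddCommMonoid R] (g : (ι → ℕ) → R) {n : ℕ}
    (hg : ∀ m ∈ piAntidiag univ (2 * n), ∀ i, Odd (m i) → g m = 0) :
    ∑ m ∈ piAntidiag univ (2 * n), g m = ∑ l ∈ piAntidiag univ n, g fun i => 2 * l i := by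
  have even_of_ne_zero (m : ι → ℕ) (hm : m ∈ piAntidiag univ (2 * n)) (hgm : g m ≠ 0) (i : ι) :
      2 ∣ m i := by
    rw [← even_iff_two_dvd, ← Nat.not_odd_iff_even]
    exact fun hi => hgm (hg m hm i hi)
  rw [← sum_filter_of_ne even_of_ne_zero, ← map_nsmul_piAntidiag_univ n two_ne_zero, sum_map]
  rfl

end Multinomial

section Cosine

/-- The real part `cos (2πk / M)` of the standard additive character of `ℤ/M`. -/
noncomputable def cosChar (M : ℕ) [NeZero M] (k : ZMod M) : ℝ := (ZMod.stdAddChar k).re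

variable {M : ℕ} [NeZero M]

lemma expect_stdAddChar_mul (b : ZMod M) :
    𝔼 k : ZMod M, ZMod.stdAddChar (k * b) = if b = 0 then 1 else 0 := by
  rw [Fintype.expect_eq_sum_div_card, AddChar.sum_mulShift b (ZMod.isPrimitive_stdAddChar M)]
  split_ifs <;> simp

lemma ofReal_cosChar (k : ZMod M) :
    (cosChar M k : ℂ) = (ZMod.stdAddChar k + ZMod.stdAddChar (-k)) / 2 := by
  rw [cosChar, Complex.re_eq_add_conj, AddChar.map_neg_eq_conj]

lemma ofReal_cosChar_pow (k : ZMod M) (j : ℕ) :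
    (cosChar M k : ℂ) ^ j = (∑ m ∈ range (j + 1),
      ZMod.stdAddChar (k * ((2 * m - j : ℤ) : ZMod M)) * j.choose m) / 2 ^ j := by
  rw [ofReal_cosChar, div_pow, add_pow]
  congr 1
  refine sum_congr rfl fun m hm => ?_
  rw [← AddChar.map_nsmul_eq_pow, ← AddChar.map_nsmul_eq_pow, ← AddChar.map_add_eq_mul]
  congr 2
  simp only [nsmul_eq_mul, Nat.cast_sub (mem_range_succ_iff.1 hm)]
  push_cast
  ring

/- Only the constant terms of `ofReal_cosChar_pow` survive the average over `k`; the bound `j < M`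
excludes wrap-around of the frequencies `2 * m - j` modulo `M`. -/
lemma expect_cosChar_pow {j : ℕ} (hj : j < M) :
    𝔼 k, cosChar M k ^ j = (∑ m ∈ range (j + 1) with 2 * m = j, (j.choose m : ℝ)) / 2 ^ j := by
  have frequency_eq_zero {m : ℕ} (hm : m ∈ range (j + 1)) :
      ((2 * m - j : ℤ) : ZMod M) = 0 ↔ 2 * m = j := by
    rw [mem_range] at hm
    rw [ZMod.intCast_zmod_eq_zero_iff_dvd]
    refine ⟨fun hdvd => ?_, fun h => by simp [← h]⟩
    have := Int.eq_zero_of_abs_lt_dvd hdvd (abs_lt.2 (by lia))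
    lia
  apply Complex.ofReal_injective
  push_cast
  simp only [ofReal_cosChar_pow, ← expect_div, expect_sum_comm, ← expect_mul,
    expect_stdAddChar_mul, ite_mul, one_mul, zero_mul]
  rw [sum_filter]
  refine congrArg (· / _) (sum_congr rfl fun m hm => ?_)
  simp only [frequency_eq_zero hm]

lemma expect_cosChar_pow_two_mul {n : ℕ} (hn : 2 * n < M) :
    𝔼 k, cosChar M k ^ (2 * n) = n.centralBinom / 4 ^ n := by
  have half : {m ∈ range (2 * n + 1) | 2 * m = 2 * n} = {n} := by grind
  rw [expect_cosChar_pow hn, half, sum_singleton, pow_mul, Nat.centralBinom]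
  norm_num

lemma expect_cosChar_pow_of_odd {j : ℕ} (hj : j < M) (hodd : Odd j) :
    𝔼 k, cosChar M k ^ j = 0 := by
  rw [expect_cosChar_pow hj, filter_false_of_mem (by grind), sum_empty, zero_div]

lemma prod_expect_cosChar_pow_of_odd {ι : Type*} [Fintype ι] {m : ι → ℕ} {i : ι}
    (hm : ∑ i, m i < M) (hi : Odd (m i)) : ∏ i, 𝔼 k, cosChar M k ^ m i = 0 :=
  prod_eq_zero (mem_univ i) <| expect_cosChar_pow_of_odd
    ((single_le_sum (fun _ _ => Nat.zero_le _) (mem_univ i)).trans_lt hm) hi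

lemma meanMoment_cosChar_of_odd {d T : ℕ} (hT : T < M) (hodd : Odd T) :
    meanMoment (cosChar M) d T = 0 := by
  rw [meanMoment_eq_sum_piAntidiag, sum_eq_zero, zero_div]
  intro m hm
  obtain ⟨rfl, -⟩ := mem_piAntidiag.1 hm
  obtain ⟨i, -, hi⟩ : ∃ i ∈ univ, Odd (m i) := by
    by_contra! heven
    simp only [Nat.not_odd_iff_even] at heven
    exact Nat.not_even_iff_odd.2 hodd (even_sum _ heven)
  rw [prod_expect_cosChar_pow_of_odd hT hi, mul_zero]

lemma meanMoment_cosChar_two_mul {d n : ℕ} (hn : 2 * n < M) :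
    meanMoment (cosChar M) d (2 * n) = n.centralBinom / 4 ^ n *
      ∑ l ∈ piAntidiag (univ : Finset (Fin d)) n, (Nat.multinomial univ l / (d : ℝ) ^ n) ^ 2 := by
  rw [meanMoment_eq_sum_piAntidiag, sum_piAntidiag_two_mul, mul_sum, sum_div]
  · refine sum_congr rfl fun l hl => ?_
    obtain ⟨rfl, -⟩ := mem_piAntidiag.1 hl
    have moments : ∏ i, 𝔼 k, cosChar M k ^ (2 * l i) =
        (∏ i, ((l i).centralBinom : ℝ)) / 4 ^ ∑ i, l i := by
      rw [← prod_pow_eq_pow_sum, ← prod_div_distrib]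
      refine prod_congr rfl fun i hi => expect_cosChar_pow_two_mul ?_
      have := single_le_sum (fun i _ => Nat.zero_le (l i)) hi
      lia
    have hmul : (Nat.multinomial univ (fun i => 2 * l i) : ℝ) * ∏ i, ((l i).centralBinom : ℝ) =
        (∑ i, l i).centralBinom * (Nat.multinomial univ l : ℝ) ^ 2 :=
      mod_cast multinomial_two_mul_mul_prod_centralBinom univ l
    rw [moments, ← mul_div_assoc, hmul]
    ring
  · intro m hm i hi
    obtain ⟨hsum, -⟩ := mem_piAntidiag.1 hm
    rw [prod_expect_cosChar_pow_of_odd (hsum.trans_lt hn) hi, mul_zero]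

end Cosine

section ReturnBound

/-- The bound on the probability that simple random walk on `ℤ^d` is back at its starting point
after `2 * n` steps. The division `j / d` is the truncated one, so the product over `j` is the value
of `∏ i, (l i)!` at the most balanced `l : Fin d → ℕ` with total `n`. -/
noncomputable def returnBound (d n : ℕ) : ℝ :=
  n.centralBinom / 4 ^ n * (n ! / (∏ j ∈ range n, (j / d + 1) : ℕ) / d ^ n)

lemma returnBound_nonneg (d n : ℕ) : 0 ≤ returnBound d n := by
  unfold returnBound
  positivity

lemma returnBound_succ (d n : ℕ) :
    returnBound d (n + 1) = returnBound d n * ((2 * n + 1) / (2 * d * ((n / d : ℕ) + 1))) := by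
  have centralBinom_succ : ((n + 1).centralBinom : ℝ) =
      2 * (2 * n + 1) * n.centralBinom / (n + 1) := by
    rw [eq_div_iff (by positivity), mul_comm]
    exact_mod_cast Nat.succ_mul_centralBinom_succ n
  simp only [returnBound, prod_range_succ, Nat.factorial_succ, pow_succ, centralBinom_succ]
  push_cast
  generalize ((n / d : ℕ) + 1 : ℝ) = q
  field_simp
  ring

lemma multinomial_le {d n : ℕ} (hd : d ≠ 0) {l : Fin d → ℕ} (hl : ∑ i, l i = n) :
    (Nat.multinomial univ l : ℝ) ≤ n ! / (∏ j ∈ range n, (j / d + 1) : ℕ) := by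
  have : NeZero d := ⟨hd⟩
  have hbal := prod_div_card_le_prod_factorial l
  rw [Fintype.card_fin, hl] at hbal
  rw [le_div_iff₀' (by positivity), ← hl, ← Nat.multinomial_spec, hl]
  exact_mod_cast Nat.mul_le_mul_right _ hbal

lemma sum_multinomial (d n : ℕ) :
    ∑ l ∈ piAntidiag (univ : Finset (Fin d)) n, (Nat.multinomial univ l : ℝ) = d ^ n := by
  simpa using (sum_pow_eq_sum_piAntidiag (univ : Finset (Fin d)) (fun _ => (1 : ℝ)) n).symm

/- The multinomial distribution has total mass one, so the sum of its squared weights is at most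
its largest weight. -/
lemma meanMoment_cosChar_le_returnBound {M : ℕ} [NeZero M] {d n : ℕ} (hd : d ≠ 0)
    (hn : 2 * n < M) : meanMoment (cosChar M) d (2 * n) ≤ returnBound d n := by
  rw [meanMoment_cosChar_two_mul hn, returnBound]
  gcongr
  set B : ℝ := n ! / (∏ j ∈ range n, (j / d + 1) : ℕ)
  calc ∑ l ∈ piAntidiag (univ : Finset (Fin d)) n, (Nat.multinomial univ l / (d : ℝ) ^ n) ^ 2
      ≤ ∑ l ∈ piAntidiag (univ : Finset (Fin d)) n,
          (B / d ^ n) * (Nat.multinomial univ l / (d : ℝ) ^ n) := sum_le_sum fun l hl => by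
        rw [sq]
        gcongr
        exact multinomial_le hd (mem_piAntidiag.1 hl).1
    _ = B / d ^ n := by
        rw [← mul_sum, ← sum_div, sum_multinomial, div_self (by positivity), mul_one]

lemma returnBound_five_mul_add (k : ℕ) {r : ℕ} (hr : r ≤ 5) :
    returnBound 5 (5 * k + r) =
      returnBound 5 (5 * k) * ∏ i ∈ range r, (10 * k + 2 * i + 1 : ℝ) / (10 * (k + 1)) := by
  induction r with
  | zero => simp
  | succ r ih =>
    rw [← add_assoc, returnBound_succ, ih (by lia), prod_range_succ,
      show (5 * k + r) / 5 = k by lia]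
    push_cast
    ring

/- The coefficients `7 / 2` and `6 / 5` were found numerically: they make the numerator of the gap
below a polynomial in `k` with nonnegative coefficients. -/
lemma sum_returnBound_block_le (k : ℕ) :
    ∑ r ∈ range 5, returnBound 5 (5 * k + r) +
        (7 / 2 * (k + 1) + 6 / 5) * returnBound 5 (5 * k + 5) ≤
      (7 / 2 * k + 6 / 5) * returnBound 5 (5 * k) := by
  have gap_nonneg : 0 ≤ returnBound 5 (5 * k) * (25000 * k ^ 5 + 320000 * k ^ 4 + 674500 * k ^ 3 +
      514285 * k ^ 2 + 133659.5 * k + 8.5) / (10 * (k + 1)) ^ 5 := by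
    have := returnBound_nonneg 5 (5 * k)
    positivity
  rw [sum_congr rfl fun r hr => returnBound_five_mul_add k ((mem_range.1 hr).le),
    returnBound_five_mul_add k le_rfl, ← sub_nonneg]
  simp only [sum_range_succ, prod_range_succ, range_zero, sum_empty, prod_empty]
  push_cast
  convert gap_nonneg using 1
  field_simp
  ring

lemma sum_range_returnBound_five_le (N : ℕ) : ∑ n ∈ range N, returnBound 5 n ≤ 1.2 := by
  have blocks (k : ℕ) : ∑ n ∈ range (5 * k), returnBound 5 n +
      (7 / 2 * k + 6 / 5) * returnBound 5 (5 * k) ≤ 1.2 := by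
    induction k with
    | zero => norm_num [returnBound]
    | succ k ih =>
      rw [mul_add_one, sum_range_add]
      push_cast
      linarith [sum_returnBound_block_le k]
  calc ∑ n ∈ range N, returnBound 5 n
      ≤ ∑ n ∈ range (5 * N), returnBound 5 n :=
        sum_le_sum_of_subset_of_nonneg (range_mono (by lia)) fun n _ _ => returnBound_nonneg 5 n
    _ ≤ 1.2 := by
        have := mul_nonneg (by positivity : (0 : ℝ) ≤ 7 / 2 * N + 6 / 5)
          (returnBound_nonneg 5 (5 * N))
        linarith [blocks N]

end ReturnBound

section Walk

/-- The unit step of the walk in the coordinate direction `a.1` with sign `a.2`. -/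
def stepVec {d : ℕ} (a : Fin d × ℤˣ) : Pt d := Pi.single a.1 (a.2 : ℤ)

lemma stepVec_injective (d : ℕ) : Function.Injective (stepVec (d := d)) := by
  rintro ⟨i, ε⟩ ⟨j, δ⟩ h
  have hi : (Pi.single j (δ : ℤ) : Pt d) i = ε := by
    simpa only [stepVec, Pi.single_eq_same] using (congrFun h i).symm
  obtain rfl : i = j := by
    by_contra hij
    exact ε.ne_zero (by rw [← hi, Pi.single_eq_of_ne hij])
  rw [Units.ext ((Pi.single_eq_same (M := fun _ => ℤ) i _).symm.trans hi)]

lemma range_stepVec (d : ℕ) : Set.range (stepVec (d := d)) = Dir d := by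
  ext v
  constructor
  · rintro ⟨⟨i, ε⟩, rfl⟩
    obtain rfl | rfl := Int.units_eq_one_or ε
    · exact ⟨i, Or.inl rfl⟩
    · exact ⟨i, Or.inr rfl⟩
  · rintro ⟨i, rfl | rfl⟩
    · exact ⟨(i, 1), rfl⟩
    · exact ⟨(i, -1), rfl⟩

lemma prob_eq_expect (d T : ℕ) (P : (Fin T → Pt d) → Prop) [DecidablePred P] :
    prob d T P = 𝔼 a : Fin T → Fin d × ℤˣ, if P (fun t => stepVec (a t)) then 1 else 0 := by
  have paths_eq_image : {s : Fin T → Pt d | (∀ t, s t ∈ Dir d) ∧ P s} =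
      (stepVec ∘ ·) '' {a : Fin T → Fin d × ℤˣ | P (stepVec ∘ a)} := by
    ext s
    simp only [← range_stepVec, Set.mem_range, Classical.skolem, ← funext_iff]
    constructor
    · rintro ⟨⟨a, rfl⟩, hs⟩
      exact ⟨a, hs, rfl⟩
    · rintro ⟨a, ha, rfl⟩
      exact ⟨⟨a, rfl⟩, ha⟩
  have card_paths : Nat.card {s : Fin T → Pt d // (∀ t, s t ∈ Dir d) ∧ P s} =
      #{a : Fin T → Fin d × ℤˣ | P fun t => stepVec (a t)} := by
    rw [← Set.coe_ofPred, paths_eq_image,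
      Nat.card_image_of_injective (stepVec_injective d).comp_left, ← Fintype.card_subtype,
      ← Nat.card_eq_fintype_card]
    rfl
  unfold prob
  rw [card_paths, Fintype.expect_eq_sum_div_card, sum_boole]
  simp [mul_comm]

/-- The probability that simple random walk on `ℤ^d` is at its starting point at time `t`. -/
noncomputable def returnProb (d t : ℕ) : ℝ := prob d t fun s => wpos d 0 s t = 0

lemma returnProb_nonneg (d t : ℕ) : 0 ≤ returnProb d t := by
  unfold returnProb prob
  positivity

lemma returnProb_eq_expect (d T : ℕ) :
    returnProb d T =
      𝔼 a : Fin T → Fin d × ℤˣ, if ∑ t, stepVec (a t) = 0 then 1 else 0 := by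
  simp [returnProb, prob_eq_expect, wpos]

end Walk

section TorusChar

variable {M : ℕ} [NeZero M] {d : ℕ}

lemma addChar_map_sum_eq_prod {A R ι : Type*} [AddCommMonoid A] [CommMonoid R] (ψ : AddChar A R)
    (s : Finset ι) (f : ι → A) : ψ (∑ i ∈ s, f i) = ∏ i ∈ s, ψ (f i) :=
  map_prod ψ.toMonoidHom (fun i => Multiplicative.ofAdd (f i)) s

/-- The character `v ↦ exp (2πi ⟨k, v⟩ / M)` of `ℤ^d`; averaging it over `k` detects the points `v`
of `M ℤ^d`. -/
noncomputable def torusChar (k : Fin d → ZMod M) (v : Pt d) : ℂ :=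
  ∏ i, ZMod.stdAddChar (k i * (v i : ZMod M))

lemma torusChar_sum {ι : Type*} (s : Finset ι) (k : Fin d → ZMod M) (v : ι → Pt d) :
    torusChar k (∑ t ∈ s, v t) = ∏ t ∈ s, torusChar k (v t) := by
  simp only [torusChar, Finset.sum_apply, Int.cast_sum, mul_sum, addChar_map_sum_eq_prod]
  exact prod_comm

lemma expect_torusChar (v : Pt d) :
    𝔼 k : Fin d → ZMod M, torusChar k v = if ∀ i, (v i : ZMod M) = 0 then 1 else 0 := by
  simp only [torusChar, expect_pi_prod fun i a => (ZMod.stdAddChar (a * (v i : ZMod M)) : ℂ),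
    expect_stdAddChar_mul, prod_ite_zero, prod_const_one, mem_univ, true_imp_iff]

lemma torusChar_stepVec (k : Fin d → ZMod M) (a : Fin d × ℤˣ) :
    torusChar k (stepVec a) = ZMod.stdAddChar (k a.1 * ((a.2 : ℤ) : ZMod M)) := by
  rw [torusChar, Fintype.prod_eq_single a.1, stepVec, Pi.single_eq_same]
  intro i hi
  rw [stepVec, Pi.single_eq_of_ne hi, Int.cast_zero, mul_zero, AddChar.map_zero_eq_one]

lemma expect_torusChar_stepVec (k : Fin d → ZMod M) :
    𝔼 a, torusChar k (stepVec a) = 𝔼 i, (cosChar M (k i) : ℂ) := by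
  rw [← univ_product_univ, expect_product]
  refine expect_congr rfl fun i _ => ?_
  rw [ofReal_cosChar, Fintype.expect_eq_sum_div_card]
  simp [torusChar_stepVec, UnitsInt.univ]

end TorusChar

lemma meanMoment_cosChar_eq_expect (M : ℕ) [NeZero M] (d T : ℕ) :
    meanMoment (cosChar M) d T = 𝔼 a : Fin T → Fin d × ℤˣ,
      if ∀ i, ((∑ t, stepVec (a t)) i : ZMod M) = 0 then 1 else 0 := by
  have expect_paths (k : Fin d → ZMod M) :
      𝔼 a : Fin T → Fin d × ℤˣ, ∏ t, torusChar k (stepVec (a t)) =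
        (𝔼 i, (cosChar M (k i) : ℂ)) ^ T := by
    rw [expect_pi_prod fun _ a => torusChar k (stepVec a), expect_torusChar_stepVec, prod_const,
      card_univ, Fintype.card_fin]
  apply Complex.ofReal_injective
  simp only [meanMoment, Complex.ofReal_expect, Complex.ofReal_pow, apply_ite Complex.ofReal,
    Complex.ofReal_one, Complex.ofReal_zero, ← expect_torusChar, torusChar_sum, ← expect_paths]
  exact expect_comm _ _ _

lemma returnProb_le_meanMoment (M : ℕ) [NeZero M] (d T : ℕ) :
    returnProb d T ≤ meanMoment (cosChar M) d T := by
  rw [returnProb_eq_expect, meanMoment_cosChar_eq_expect]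
  refine expect_le_expect fun a _ => ?_
  split_ifs with hreturn hmod
  · rfl
  · exact absurd (fun i => by rw [hreturn, Pi.zero_apply, Int.cast_zero]) hmod
  · exact zero_le_one
  · rfl

lemma returnProb_two_mul_le {d m : ℕ} (hm : m ≠ 0) (hmd : m ≤ d) (n : ℕ) :
    returnProb d (2 * n) ≤ returnBound m n :=
  have hm1 : 1 ≤ m := Nat.one_le_iff_ne_zero.2 hm
  calc returnProb d (2 * n)
      ≤ meanMoment (cosChar (2 * n + 1)) d (2 * n) := returnProb_le_meanMoment _ _ _
    _ ≤ meanMoment (cosChar (2 * n + 1)) m (2 * n) :=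
        antitoneOn_meanMoment _ (even_two_mul n) hm1 (hm1.trans hmd) hmd
    _ ≤ returnBound m n := meanMoment_cosChar_le_returnBound hm (Nat.lt_succ_self _)

lemma returnProb_of_odd {d T : ℕ} (hT : Odd T) : returnProb d T = 0 :=
  le_antisymm
    ((returnProb_le_meanMoment (T + 1) d T).trans_eq
      (meanMoment_cosChar_of_odd (Nat.lt_succ_self T) hT))
    (returnProb_nonneg d T)

/-- For every `d ≥ 5`, the Green's function of simple random walk on `ℤ^d` at the origin
satisfies `G_d(o) ≤ 1.2`. -/
theorem green_bound (d : ℕ) (hd : 5 ≤ d) : green d 0 ≤ 1.2 := by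
  have odd_eq_zero (n : ℕ) : returnProb d (2 * n + 1) = 0 :=
    returnProb_of_odd (odd_two_mul_add_one n)
  have sum_even_le (N : ℕ) : ∑ n ∈ range N, returnProb d (2 * n) ≤ 1.2 :=
    (sum_le_sum fun n _ => returnProb_two_mul_le (by norm_num) hd n).trans
      (sum_range_returnBound_five_le N)
  have summable_even : Summable fun n => returnProb d (2 * n) :=
    summable_of_sum_range_le (fun n => returnProb_nonneg d _) sum_even_le
  calc green d 0
      = ∑' n, returnProb d (2 * n) + ∑' n, returnProb d (2 * n + 1) :=
        (tsum_even_add_odd summable_even (by simpa only [odd_eq_zero] using summable_zero)).symm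
    _ = ∑' n, returnProb d (2 * n) := by simp only [odd_eq_zero, tsum_zero, add_zero]
    _ ≤ 1.2 := Real.tsum_le_of_sum_range_le (fun n => returnProb_nonneg d _) sum_even_le

end HATFormal
end
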